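/- arXiv:2207.06129 — 2 statements merged into one kernel-verified Lean document; each statement's English description precedes it below -/
import Mathlib

section
/- Let 1 < p < ∞ and w ∈ A_p, and let M be the Hardy–Littlewood maximal operator. Suppose ψ₁ and ψ₂ are positive functions on ℝⁿ × (0,∞) for which there is a constant C > 0, independent of a and r, with ∫_r^∞ ψ₁(a,t) dt/t ≤ C·ψ₂(a,r) for every (a,r) ∈ ℝⁿ × (0,∞). Then M is bounded from M^{p,w}_{ψ₁} to M^{p,w}_{ψ₂}: there is C' > 0 such that ‖Mf‖_{M^{p,w}_{ψ₂}} ≤ C'·‖f‖_{M^{p,w}_{ψ₁}} for every f ∈ M^{p,w}_{ψ₁}. -/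
open MeasureTheory Metric Set
open scoped ENNReal

noncomputable section

/-- The weighted measure of a set: `w(E) = ∫_E w(x) dx`, valued in `ℝ≥0∞`. -/
def wSet {n : ℕ} (w : EuclideanSpace ℝ (Fin n) → ℝ)
    (E : Set (EuclideanSpace ℝ (Fin n))) : ℝ≥0∞ :=
  ∫⁻ x in E, ENNReal.ofReal (w x)

/-- The weighted Lebesgue norm `‖f‖_{L^{p,w}(Ω)} = (∫_Ω |f(x)|^p w(x) dx)^{1/p}`. -/
def wLp {n : ℕ} (p : ℝ) (w f : EuclideanSpace ℝ (Fin n) → ℝ)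
    (Ω : Set (EuclideanSpace ℝ (Fin n))) : ℝ≥0∞ :=
  (∫⁻ x in Ω, ENNReal.ofReal |f x| ^ p * ENNReal.ofReal (w x)) ^ (1 / p)

/-- The weighted Lebesgue norm for an `ℝ≥0∞`-valued function. -/
def wLpE {n : ℕ} (p : ℝ) (w : EuclideanSpace ℝ (Fin n) → ℝ)
    (g : EuclideanSpace ℝ (Fin n) → ℝ≥0∞) (Ω : Set (EuclideanSpace ℝ (Fin n))) : ℝ≥0∞ :=
  (∫⁻ x in Ω, g x ^ p * ENNReal.ofReal (w x)) ^ (1 / p)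

/-- The weak weighted Lebesgue norm `‖f‖_{WL^{p,w}(Ω)} = sup_{γ>0} γ·w({x ∈ Ω : |f(x)| > γ})^{1/p}`. -/
def wWeakLp {n : ℕ} (p : ℝ) (w f : EuclideanSpace ℝ (Fin n) → ℝ)
    (Ω : Set (EuclideanSpace ℝ (Fin n))) : ℝ≥0∞ :=
  ⨆ γ : Set.Ioi (0 : ℝ),
    ENNReal.ofReal γ.1 * (wSet w {x | x ∈ Ω ∧ γ.1 < |f x|}) ^ (1 / p)

/-- The weak weighted Lebesgue norm for an `ℝ≥0∞`-valued function. -/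
def wWeakLpE {n : ℕ} (p : ℝ) (w : EuclideanSpace ℝ (Fin n) → ℝ)
    (g : EuclideanSpace ℝ (Fin n) → ℝ≥0∞) (Ω : Set (EuclideanSpace ℝ (Fin n))) : ℝ≥0∞ :=
  ⨆ γ : Set.Ioi (0 : ℝ),
    ENNReal.ofReal γ.1 * (wSet w {x | x ∈ Ω ∧ ENNReal.ofReal γ.1 < g x}) ^ (1 / p)

/-- `f ∈ L^{p,w}_loc`: `f` is measurable and `‖f‖_{L^{p,w}(B)} < ∞` on every ball. -/
def MemLocWLp {n : ℕ} (p : ℝ) (w f : EuclideanSpace ℝ (Fin n) → ℝ) : Prop :=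
  Measurable f ∧ ∀ (a : EuclideanSpace ℝ (Fin n)) (r : ℝ), 0 < r → wLp p w f (ball a r) < ⊤

/-- A weight: nonnegative, measurable, locally integrable, positive a.e. -/
def IsWeight {n : ℕ} (w : EuclideanSpace ℝ (Fin n) → ℝ) : Prop :=
  Measurable w ∧ (∀ x, 0 ≤ w x) ∧ LocallyIntegrable w volume ∧ ∀ᵐ x ∂volume, 0 < w x

/-- The Muckenhoupt class `A_p` for `1 < p`. -/
def MuckAp {n : ℕ} (p : ℝ) (w : EuclideanSpace ℝ (Fin n) → ℝ) : Prop :=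
  ∃ C : ℝ, 0 < C ∧ ∀ (a : EuclideanSpace ℝ (Fin n)) (r : ℝ), 0 < r →
    ((volume (ball a r))⁻¹ * ∫⁻ x in ball a r, ENNReal.ofReal (w x)) *
      ((volume (ball a r))⁻¹ *
        ∫⁻ x in ball a r, ENNReal.ofReal (w x ^ (-(1 / (p - 1))))) ^ (p - 1) ≤
      ENNReal.ofReal C

/-- The Muckenhoupt class `A_1`. -/
def MuckA1 {n : ℕ} (w : EuclideanSpace ℝ (Fin n) → ℝ) : Prop :=
  ∃ C : ℝ, 0 < C ∧ ∀ (a : EuclideanSpace ℝ (Fin n)) (r : ℝ), 0 < r →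
    ((volume (ball a r))⁻¹ * ∫⁻ x in ball a r, ENNReal.ofReal (w x)) *
      essSup (fun x => ENNReal.ofReal (w x)⁻¹) (volume.restrict (ball a r)) ≤
      ENNReal.ofReal C

/-- The class `A_{p,q}` for `1 < p`, where `p'` is the conjugate exponent of `p`. -/
def MuckApq {n : ℕ} (p q p' : ℝ) (w : EuclideanSpace ℝ (Fin n) → ℝ) : Prop :=
  ∃ C : ℝ, 0 < C ∧ ∀ (a : EuclideanSpace ℝ (Fin n)) (r : ℝ), 0 < r →
    ((volume (ball a r))⁻¹ * ∫⁻ x in ball a r, ENNReal.ofReal (w x ^ q)) ^ (1 / q) *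
      ((volume (ball a r))⁻¹ * ∫⁻ x in ball a r, ENNReal.ofReal (w x ^ (-p'))) ^ (1 / p') ≤
      ENNReal.ofReal C

/-- The class `A_{1,q}`. -/
def MuckA1q {n : ℕ} (q : ℝ) (w : EuclideanSpace ℝ (Fin n) → ℝ) : Prop :=
  ∃ C : ℝ, 0 < C ∧ ∀ (a : EuclideanSpace ℝ (Fin n)) (r : ℝ), 0 < r →
    ((volume (ball a r))⁻¹ * ∫⁻ x in ball a r, ENNReal.ofReal (w x ^ q)) ^ (1 / q) *
      essSup (fun x => ENNReal.ofReal (w x)⁻¹) (volume.restrict (ball a r)) ≤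
      ENNReal.ofReal C

/-- The Hardy–Littlewood maximal operator. -/
def HLMax {n : ℕ} (f : EuclideanSpace ℝ (Fin n) → ℝ)
    (x : EuclideanSpace ℝ (Fin n)) : ℝ≥0∞ :=
  ⨆ r : Set.Ioi (0 : ℝ), (volume (ball x r.1))⁻¹ * ∫⁻ y in ball x r.1, ENNReal.ofReal |f y|

/-- The fractional integral operator `I_α` (applied to `|f|`, valued in `ℝ≥0∞`). -/
def fracIntE {n : ℕ} (α : ℝ) (f : EuclideanSpace ℝ (Fin n) → ℝ)
    (x : EuclideanSpace ℝ (Fin n)) : ℝ≥0∞ :=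
  ∫⁻ y, ENNReal.ofReal |f y| / ENNReal.ofReal (dist x y ^ ((n : ℝ) - α))

/-- The fractional maximal operator `M_α`. -/
def fracMax {n : ℕ} (α : ℝ) (f : EuclideanSpace ℝ (Fin n) → ℝ)
    (x : EuclideanSpace ℝ (Fin n)) : ℝ≥0∞ :=
  ⨆ r : Set.Ioi (0 : ℝ),
    (volume (ball x r.1)) ^ (α / (n : ℝ) - 1) * ∫⁻ y in ball x r.1, ENNReal.ofReal |f y|

/-- The generalized weighted Morrey norm `‖f‖_{M^{p,w}_ψ}`. -/
def morreyNorm {n : ℕ} (p : ℝ) (w : EuclideanSpace ℝ (Fin n) → ℝ)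
    (ψ : EuclideanSpace ℝ (Fin n) → ℝ → ℝ) (f : EuclideanSpace ℝ (Fin n) → ℝ) : ℝ≥0∞ :=
  ⨆ (a : EuclideanSpace ℝ (Fin n)) (r : Set.Ioi (0 : ℝ)),
    (ENNReal.ofReal (ψ a r.1))⁻¹ * wSet w (ball a r.1) ^ (-(1 / p)) * wLp p w f (ball a r.1)

/-- The generalized weighted Morrey norm for an `ℝ≥0∞`-valued function. -/
def morreyNormE {n : ℕ} (p : ℝ) (w : EuclideanSpace ℝ (Fin n) → ℝ)
    (ψ : EuclideanSpace ℝ (Fin n) → ℝ → ℝ) (g : EuclideanSpace ℝ (Fin n) → ℝ≥0∞) : ℝ≥0∞ :=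
  ⨆ (a : EuclideanSpace ℝ (Fin n)) (r : Set.Ioi (0 : ℝ)),
    (ENNReal.ofReal (ψ a r.1))⁻¹ * wSet w (ball a r.1) ^ (-(1 / p)) * wLpE p w g (ball a r.1)

/-- The generalized weighted weak Morrey norm `‖f‖_{WM^{p,w}_ψ}`. -/
def morreyWeakNorm {n : ℕ} (p : ℝ) (w : EuclideanSpace ℝ (Fin n) → ℝ)
    (ψ : EuclideanSpace ℝ (Fin n) → ℝ → ℝ) (f : EuclideanSpace ℝ (Fin n) → ℝ) : ℝ≥0∞ :=
  ⨆ (a : EuclideanSpace ℝ (Fin n)) (r : Set.Ioi (0 : ℝ)),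
    (ENNReal.ofReal (ψ a r.1))⁻¹ * wSet w (ball a r.1) ^ (-(1 / p)) * wWeakLp p w f (ball a r.1)

/-- The generalized weighted weak Morrey norm for an `ℝ≥0∞`-valued function. -/
def morreyWeakNormE {n : ℕ} (p : ℝ) (w : EuclideanSpace ℝ (Fin n) → ℝ)
    (ψ : EuclideanSpace ℝ (Fin n) → ℝ → ℝ) (g : EuclideanSpace ℝ (Fin n) → ℝ≥0∞) : ℝ≥0∞ :=
  ⨆ (a : EuclideanSpace ℝ (Fin n)) (r : Set.Ioi (0 : ℝ)),
    (ENNReal.ofReal (ψ a r.1))⁻¹ * wSet w (ball a r.1) ^ (-(1 / p)) * wWeakLpE p w g (ball a r.1)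

end

/-!
The heart of the matter is Muckenhoupt's theorem, that `M` is bounded on `L^p(w)`. It is proved by
Lerner's argument. Let `σ = w ^ (-1 / (p - 1))` be the dual weight and let `M_w` and `M_σ` be the
maximal operators with respect to the measures `w dx` and `σ dx`. The `A_p` condition yields the
pointwise bound `(M h) ^ (p - 1) ≤ K * M_w ((M_σ (h / σ)) ^ (p - 1) / w)`. Both weighted measures
are doubling, so the Vitali covering lemma bounds `M_w` on `L^q(w)`, with `q` conjugate to `p`, and
`M_σ` on `L^p(σ)`, and these two bounds compose to the one wanted.

On a ball `B(a, r)`, the function `M f` is at most `M (f 1_{B(a, 2r)})`, which is handled by the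
`L^p(w)` bound, plus a multiple of the averages of `|f|` over balls `B(a, t)` with `t ≥ r`, which
the `A_p` condition dominates by averages of `|f| ^ p` with respect to `w dx`. By doubling, those
averages are comparable at all radii `s ∈ [t, 2t]`, so the `p`-th root of each of them is at most a
multiple of its integral against `ds / s` over `(t, ∞)`, hence of the norm of `f` times
`∫_r^∞ ψ₁(a, s) ds / s ≤ C ψ₂(a, r)`.
-/

open scoped NNReal

section BallMeasures

variable {X : Type*} [PseudoMetricSpace X] [MeasurableSpace X]

lemma measure_ball_eq_iSup_rat (ν : Measure X) (x : X) (r : ℝ) :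
    ν (ball x r) = ⨆ q : {q : ℚ // (q : ℝ) < r}, ν (ball x (q.1 : ℝ)) := by
  have hball : ball x r = ⋃ q : {q : ℚ // (q : ℝ) < r}, ball x (q.1 : ℝ) := by
    refine Subset.antisymm (fun y hy ↦ ?_) (iUnion_subset fun q ↦ ball_subset_ball q.2.le)
    obtain ⟨q, hyq, hqr⟩ := exists_rat_btwn (mem_ball.mp hy)
    exact mem_iUnion.mpr ⟨⟨q, hqr⟩, hyq⟩
  have hdir : Directed (· ⊆ ·) fun q : {q : ℚ // (q : ℝ) < r} ↦ ball x (q.1 : ℝ) :=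
    Monotone.directed_le fun q q' h ↦ ball_subset_ball (mod_cast h)
  rw [hball, hdir.measure_iUnion]

lemma lowerSemicontinuous_measure_ball (ν : Measure X) (r : ℝ) :
    LowerSemicontinuous fun x ↦ ν (ball x r) := by
  intro x a ha
  obtain ⟨⟨q, hq⟩, haq⟩ := lt_iSup_iff.mp (ha.trans_eq (measure_ball_eq_iSup_rat ν x r))
  filter_upwards [ball_mem_nhds x (sub_pos.mpr hq)] with y hy
  exact haq.trans_le <| measure_mono <| ball_subset_ball' <| by
    rw [mem_ball, dist_comm] at hy
    linarith

lemma setLAverage_ball_eq_withDensity_div [OpensMeasurableSpace X] (μ : Measure X)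
    (g : X → ℝ≥0∞) (x : X) (r : ℝ) :
    ⨍⁻ y in ball x r, g y ∂μ = μ.withDensity g (ball x r) / μ (ball x r) := by
  rw [setLAverage_eq, withDensity_apply _ measurableSet_ball]

end BallMeasures

section Averages

variable {X : Type*} [MeasurableSpace X] {μ : Measure X} {s t : Set X} {g h : X → ℝ≥0∞}

lemma setLAverage_mono (hgh : ∀ x, g x ≤ h x) :
    ⨍⁻ x in s, g x ∂μ ≤ ⨍⁻ x in s, h x ∂μ :=
  setLAverage_mono_ae s (.of_forall hgh)

lemma setLAverage_le_mul_of_subset {C : ℝ≥0} (hst : s ⊆ t) (hC : μ t ≤ C * μ s) :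
    ⨍⁻ x in s, g x ∂μ ≤ C * ⨍⁻ x in t, g x ∂μ := by
  rcases eq_or_ne (μ s) 0 with hs | hs
  · simp [setLAverage_eq, setLIntegral_measure_zero s g hs]
  have hC0 : C ≠ 0 := by
    rintro rfl
    exact hs (measure_mono_null hst (by simpa using hC))
  have hinv : (μ s)⁻¹ ≤ C * (μ t)⁻¹ := by
    rw [← ENNReal.inv_le_inv, ENNReal.mul_inv (.inl (by simpa)) (.inl ENNReal.coe_ne_top), inv_inv,
      inv_inv]
    exact ENNReal.inv_mul_le_iff (by simpa) ENNReal.coe_ne_top |>.mpr hC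
  calc ⨍⁻ x in s, g x ∂μ = (μ s)⁻¹ * ∫⁻ x in s, g x ∂μ := by
        rw [setLAverage_eq, ENNReal.div_eq_inv_mul]
    _ ≤ C * (μ t)⁻¹ * ∫⁻ x in t, g x ∂μ := by gcongr
    _ = C * ⨍⁻ x in t, g x ∂μ := by rw [setLAverage_eq, ENNReal.div_eq_inv_mul, mul_assoc]

lemma setLAverage_ne_zero (hg : Measurable g) (hg0 : ∀ᵐ x ∂μ, g x ≠ 0) (hs0 : μ s ≠ 0)
    (hs : μ s ≠ ∞) : ⨍⁻ x in s, g x ∂μ ≠ 0 := by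
  rw [setLAverage_eq, ne_eq, ENNReal.div_eq_zero_iff, lintegral_eq_zero_iff hg]
  rintro (hzero | htop)
  · refine hs0 (Measure.restrict_eq_zero.mp (ae_eq_bot.mp (Filter.empty_mem_iff_bot.mp ?_)))
    filter_upwards [hzero, ae_restrict_of_ae hg0] with x hx hx0 using hx0 hx
  · exact hs htop

lemma rpow_setLAverage_le (hg : AEMeasurable g (μ.restrict s)) {p : ℝ} (hp : 1 ≤ p) :
    (⨍⁻ x in s, g x ∂μ) ^ p ≤ ⨍⁻ x in s, g x ^ p ∂μ := by
  have hp0 : 0 < p := by linarith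
  rcases eq_or_ne (μ s) 0 with hs0 | hs0
  · simp [setLAverage_eq, setLIntegral_measure_zero s _ hs0, hp0]
  rcases eq_or_ne (μ s) ∞ with hs | hs
  · simp [setLAverage_eq, hs, hp0]
  let P : Measure X := (μ s)⁻¹ • μ.restrict s
  have hP : IsProbabilityMeasure P :=
    ⟨by simp [P, ENNReal.inv_mul_cancel hs0 hs]⟩
  have hmono := eLpNorm'_le_eLpNorm'_of_exponent_le one_pos hp P
    (hg.smul_measure (μ s)⁻¹).aestronglyMeasurable
  simp only [eLpNorm', enorm_eq_self, ENNReal.rpow_one, one_div, inv_one] at hmono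
  rw [setLAverage_eq', setLAverage_eq']
  exact (ENNReal.le_rpow_inv_iff hp0).mp hmono

lemma setLAverage_withDensity_mul_setLAverage {w : X → ℝ≥0∞} (hw : Measurable w)
    (hg : Measurable g) (hs : MeasurableSet s) (hfin : μ.withDensity w s ≠ ∞) :
    (⨍⁻ x in s, g x ∂μ.withDensity w) * ⨍⁻ x in s, w x ∂μ = ⨍⁻ x in s, g x * w x ∂μ := by
  rw [setLAverage_eq, setLAverage_eq, setLAverage_eq, ← withDensity_apply w hs, ← mul_div_assoc,
    ENNReal.div_mul_cancel' (fun h ↦ setLIntegral_measure_zero s g h) (fun h ↦ absurd h hfin),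
    setLIntegral_withDensity_eq_setLIntegral_mul μ hw hg hs]
  simp only [Pi.mul_apply, mul_comm]

end Averages

section Maximal

/-- The centred Hardy–Littlewood maximal function with respect to an arbitrary measure `μ`. -/
noncomputable def maximalFunction {X : Type*} [PseudoMetricSpace X] [MeasurableSpace X]
    (μ : Measure X) (g : X → ℝ≥0∞) (x : X) : ℝ≥0∞ :=
  ⨆ r : Ioi (0 : ℝ), ⨍⁻ y in ball x r.1, g y ∂μ

/-- A global doubling condition with an explicit constant. Mathlib's `IsUnifLocDoublingMeasure`
only controls balls of small radius, whereas the maximal function sees every scale. -/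
def IsDoublingWith {X : Type*} [PseudoMetricSpace X] [MeasurableSpace X] (μ : Measure X)
    (D : ℝ≥0) : Prop :=
  ∀ (x : X) (r : ℝ), 0 < r → μ (ball x (2 * r)) ≤ D * μ (ball x r)

variable {X : Type*} [PseudoMetricSpace X] [MeasurableSpace X] {μ : Measure X} {g h : X → ℝ≥0∞}
  {D : ℝ≥0}

lemma setLAverage_ball_le_maximalFunction (x : X) {r : ℝ} (hr : 0 < r) :
    ⨍⁻ y in ball x r, g y ∂μ ≤ maximalFunction μ g x :=
  le_iSup (fun r : Ioi (0 : ℝ) ↦ ⨍⁻ y in ball x r.1, g y ∂μ) ⟨r, hr⟩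

lemma lt_maximalFunction_iff {x : X} {l : ℝ≥0∞} :
    l < maximalFunction μ g x ↔ ∃ r : ℝ, 0 < r ∧ l < ⨍⁻ y in ball x r, g y ∂μ := by
  simp only [maximalFunction, lt_iSup_iff, Subtype.exists, mem_Ioi, exists_prop]

lemma maximalFunction_eq_iSup_rat [OpensMeasurableSpace X] (μ : Measure X) (g : X → ℝ≥0∞) (x : X) :
    maximalFunction μ g x = ⨆ q : {q : ℚ // 0 < q}, ⨍⁻ y in ball x (q.1 : ℝ), g y ∂μ := by
  refine le_antisymm (iSup_le fun ⟨r, _⟩ ↦ ?_)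
    (iSup_le fun q ↦ setLAverage_ball_le_maximalFunction x (mod_cast q.2))
  rw [setLAverage_ball_eq_withDensity_div, measure_ball_eq_iSup_rat, ENNReal.iSup_div]
  refine iSup_le fun ⟨q, hqr⟩ ↦ ?_
  rcases le_or_gt q 0 with hq | hq
  · simp [ball_eq_empty.mpr (Rat.cast_nonpos.mpr hq)]
  calc μ.withDensity g (ball x q) / μ (ball x r)
      ≤ μ.withDensity g (ball x q) / μ (ball x q) :=
        ENNReal.div_le_div_left (measure_mono (ball_subset_ball hqr.le)) _
    _ = ⨍⁻ y in ball x q, g y ∂μ := (setLAverage_ball_eq_withDensity_div ..).symm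
    _ ≤ ⨆ q : {q : ℚ // 0 < q}, ⨍⁻ y in ball x (q.1 : ℝ), g y ∂μ :=
        le_iSup (fun q : {q : ℚ // 0 < q} ↦ ⨍⁻ y in ball x (q.1 : ℝ), g y ∂μ) ⟨q, hq⟩

lemma measurable_maximalFunction [OpensMeasurableSpace X] (μ : Measure X) (g : X → ℝ≥0∞) :
    Measurable (maximalFunction μ g) := by
  simp only [funext (maximalFunction_eq_iSup_rat μ g), setLAverage_ball_eq_withDensity_div]
  exact .iSup fun q ↦ (lowerSemicontinuous_measure_ball _ _).measurable.div
    (lowerSemicontinuous_measure_ball _ _).measurable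

lemma maximalFunction_le_add_of_le_add {c : ℝ≥0∞} (hgh : ∀ x, g x ≤ h x + c) (x : X) :
    maximalFunction μ g x ≤ maximalFunction μ h x + c := by
  refine iSup_le fun ⟨r, hr⟩ ↦ ?_
  calc ⨍⁻ y in ball x r, g y ∂μ ≤ ⨍⁻ y in ball x r, (h y + c) ∂μ := setLAverage_mono hgh
    _ = ⨍⁻ y in ball x r, h y ∂μ + c * (μ (ball x r) / μ (ball x r)) := by
        rw [setLAverage_eq, setLAverage_eq, lintegral_add_right _ measurable_const,
          setLIntegral_const, ENNReal.add_div, mul_div_assoc]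
    _ ≤ maximalFunction μ h x + c := by
        gcongr
        · exact setLAverage_ball_le_maximalFunction x hr
        · exact mul_le_of_le_one_right' ENNReal.div_self_le_one

namespace IsDoublingWith

lemma measure_ball_two_pow_mul_le (hμ : IsDoublingWith μ D) (k : ℕ) (x : X) {r : ℝ} (hr : 0 < r) :
    μ (ball x (2 ^ k * r)) ≤ (D ^ k : ℝ≥0) * μ (ball x r) := by
  induction k with
  | zero => simp
  | succ k ih =>
    calc μ (ball x (2 ^ (k + 1) * r)) = μ (ball x (2 * (2 ^ k * r))) := by ring_nf
      _ ≤ D * μ (ball x (2 ^ k * r)) := hμ x _ (by positivity)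
      _ ≤ D * ((D ^ k : ℝ≥0) * μ (ball x r)) := by gcongr
      _ = (D ^ (k + 1) : ℝ≥0) * μ (ball x r) := by push_cast; ring

lemma setLAverage_ball_le (hμ : IsDoublingWith μ D) {k : ℕ} {x y : X} {r s : ℝ} (hr : 0 < r)
    (hrs : dist x y + r ≤ s) (hsr : dist x y + s ≤ 2 ^ k * r) :
    ⨍⁻ z in ball x r, g z ∂μ ≤ (D ^ k : ℝ≥0) * ⨍⁻ z in ball y s, g z ∂μ := by
  refine setLAverage_le_mul_of_subset (ball_subset_ball' (by linarith)) ?_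
  refine (measure_mono <| ball_subset_ball' ?_).trans (hμ.measure_ball_two_pow_mul_le k x hr)
  rw [dist_comm]
  linarith

lemma measure_ball_ne_top [IsLocallyFiniteMeasure μ] (hμ : IsDoublingWith μ D) (x : X) (r : ℝ) :
    μ (ball x r) ≠ ∞ := by
  obtain ⟨ε, hε, hfin⟩ := (μ.finiteAt_nhds x).exists_mem_basis nhds_basis_ball
  obtain ⟨k, hk⟩ := pow_unbounded_of_one_lt (r / ε) one_lt_two
  refine ne_top_of_le_ne_top ?_ <|
    (measure_mono <| ball_subset_ball ((div_lt_iff₀ hε).mp hk).le).trans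
      (hμ.measure_ball_two_pow_mul_le k x hε)
  exact ENNReal.mul_ne_top ENNReal.coe_ne_top hfin.ne

lemma setLAverage_ball_le_maximalFunction_of_mem (hμ : IsDoublingWith μ D) {x y : X} {r : ℝ}
    (hy : y ∈ ball x r) :
    ⨍⁻ z in ball x r, g z ∂μ ≤ (D ^ 2 : ℝ≥0) * maximalFunction μ g y := by
  have hr : 0 < r := pos_of_mem_ball hy
  have hxy : dist x y < r := mem_ball'.mp hy
  calc ⨍⁻ z in ball x r, g z ∂μ ≤ (D ^ 2 : ℝ≥0) * ⨍⁻ z in ball y (2 * r), g z ∂μ :=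
        hμ.setLAverage_ball_le hr (by linarith) (by linarith)
    _ ≤ (D ^ 2 : ℝ≥0) * maximalFunction μ g y := by
        gcongr
        exact setLAverage_ball_le_maximalFunction y (by positivity)

end IsDoublingWith

end Maximal

section WeakType

variable {X : Type*} [PseudoMetricSpace X] [TopologicalSpace.SeparableSpace X]
  [MeasurableSpace X] {μ : Measure X} {D : ℝ≥0} {g : X → ℝ≥0∞}

namespace IsDoublingWith

lemma exists_pairwiseDisjoint_balls_measure_le (hμ : IsDoublingWith μ D) {s : Set X} {r : X → ℝ}
    {R : ℝ} (hr : ∀ x ∈ s, 0 < r x) (hR : ∀ x ∈ s, r x ≤ R) :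
    ∃ u ⊆ s, u.Countable ∧ u.PairwiseDisjoint (fun x ↦ ball x (r x)) ∧
      μ s ≤ (D ^ 3 : ℝ≥0) * ∑' x : u, μ (ball (x : X) (r x)) := by
  obtain ⟨u, hus, hdisj, hcover⟩ :=
    Vitali.exists_disjoint_subfamily_covering_enlargement_ball s id r R hR 5 (by norm_num)
  have hcount : u.Countable := hdisj.countable_of_isOpen (fun _ _ ↦ isOpen_ball)
    fun x hx ↦ ⟨x, mem_ball_self (hr x (hus hx))⟩
  have hsub : s ⊆ ⋃ x ∈ u, ball x (2 ^ 3 * r x) := fun x hx ↦ by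
    obtain ⟨y, hy, hxy⟩ := hcover x hx
    refine mem_biUnion hy (ball_subset_ball ?_ (hxy (mem_ball_self (hr x hx))))
    linarith [hr y (hus hy)]
  refine ⟨u, hus, hcount, hdisj, ?_⟩
  calc μ s ≤ ∑' x : u, μ (ball (x : X) (2 ^ 3 * r x)) :=
        (measure_mono hsub).trans (measure_biUnion_le μ hcount _)
    _ ≤ ∑' x : u, (D ^ 3 : ℝ≥0) * μ (ball (x : X) (r x)) :=
        ENNReal.tsum_le_tsum fun x ↦ hμ.measure_ball_two_pow_mul_le 3 x (hr x (hus x.2))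
    _ = (D ^ 3 : ℝ≥0) * ∑' x : u, μ (ball (x : X) (r x)) := ENNReal.tsum_mul_left

variable [OpensMeasurableSpace X]

lemma mul_measure_le_lintegral_of_forall_ball (hμ : IsDoublingWith μ D) {s : Set X} {r : X → ℝ}
    {R : ℝ} {l : ℝ≥0∞} (hr : ∀ x ∈ s, 0 < r x) (hR : ∀ x ∈ s, r x ≤ R)
    (hl : ∀ x ∈ s, l * μ (ball x (r x)) ≤ ∫⁻ y in ball x (r x), g y ∂μ) :
    l * μ s ≤ (D ^ 3 : ℝ≥0) * ∫⁻ y, g y ∂μ := by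
  obtain ⟨u, hus, hcount, hdisj, hμs⟩ := hμ.exists_pairwiseDisjoint_balls_measure_le hr hR
  calc l * μ s ≤ l * ((D ^ 3 : ℝ≥0) * ∑' x : u, μ (ball (x : X) (r x))) := by gcongr
    _ = (D ^ 3 : ℝ≥0) * ∑' x : u, l * μ (ball (x : X) (r x)) := by
        rw [ENNReal.tsum_mul_left, mul_left_comm]
    _ ≤ (D ^ 3 : ℝ≥0) * ∑' x : u, ∫⁻ y in ball (x : X) (r x), g y ∂μ := by
        gcongr with x
        exact hl x (hus x.2)
    _ = (D ^ 3 : ℝ≥0) * ∫⁻ y in ⋃ x ∈ u, ball x (r x), g y ∂μ := by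
        rw [lintegral_biUnion hcount (fun _ _ ↦ measurableSet_ball) hdisj]
    _ ≤ (D ^ 3 : ℝ≥0) * ∫⁻ y, g y ∂μ := by
        gcongr
        exact Measure.restrict_le_self

lemma mul_measure_lt_maximalFunction_le (hμ : IsDoublingWith μ D) (g : X → ℝ≥0∞) (l : ℝ≥0∞) :
    l * μ {x | l < maximalFunction μ g x} ≤ (D ^ 3 : ℝ≥0) * ∫⁻ x, g x ∂μ := by
  -- Vitali's lemma needs bounded radii, so the set is exhausted according to the size of a witness.
  let E : ℕ → Set X := fun N ↦
    {x | ∃ r : ℝ, 0 < r ∧ r ≤ N ∧ l * μ (ball x r) ≤ ∫⁻ y in ball x r, g y ∂μ}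
  have hEmono : Monotone E := fun N N' hN x ⟨r, hr, hrN, hl⟩ ↦
    ⟨r, hr, hrN.trans (mod_cast hN), hl⟩
  have hsub : {x | l < maximalFunction μ g x} ⊆ ⋃ N, E N := fun x hx ↦ by
    obtain ⟨r, hr, hlr⟩ := lt_maximalFunction_iff.mp hx
    obtain ⟨N, hN⟩ := exists_nat_ge r
    rw [setLAverage_eq] at hlr
    exact mem_iUnion.mpr ⟨N, r, hr, hN, ENNReal.mul_le_of_le_div hlr.le⟩
  have hE (N : ℕ) : l * μ (E N) ≤ (D ^ 3 : ℝ≥0) * ∫⁻ x, g x ∂μ := by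
    choose! r hr hrN hl using fun x (hx : x ∈ E N) ↦ hx
    exact hμ.mul_measure_le_lintegral_of_forall_ball hr hrN hl
  calc l * μ {x | l < maximalFunction μ g x} ≤ l * μ (⋃ N, E N) := by gcongr
    _ = ⨆ N, l * μ (E N) := by rw [hEmono.measure_iUnion, ENNReal.mul_iSup]
    _ ≤ (D ^ 3 : ℝ≥0) * ∫⁻ x, g x ∂μ := iSup_le hE

lemma mul_measure_two_mul_lt_maximalFunction_le (hμ : IsDoublingWith μ D) (hg : Measurable g)
    {l : ℝ≥0∞} (hl : l ≠ ∞) :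
    l * μ {x | 2 * l < maximalFunction μ g x} ≤ (D ^ 3 : ℝ≥0) * ∫⁻ x in {x | l < g x}, g x ∂μ := by
  set G : Set X := {x | l < g x}
  have hgG (x : X) : g x ≤ G.indicator g x + l := by
    by_cases hx : x ∈ G
    · simp [hx]
    · simpa [hx] using not_lt.mp hx
  have hsub : {x | 2 * l < maximalFunction μ g x} ⊆ {x | l < maximalFunction μ (G.indicator g) x} :=
    fun x (hx : 2 * l < _) ↦ (ENNReal.add_lt_add_iff_right hl).mp <| by
      simpa only [two_mul] using hx.trans_le (maximalFunction_le_add_of_le_add hgG x)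
  calc l * μ {x | 2 * l < maximalFunction μ g x}
      ≤ l * μ {x | l < maximalFunction μ (G.indicator g) x} := by gcongr
    _ ≤ (D ^ 3 : ℝ≥0) * ∫⁻ x, G.indicator g x ∂μ := hμ.mul_measure_lt_maximalFunction_le _ l
    _ = (D ^ 3 : ℝ≥0) * ∫⁻ x in G, g x ∂μ := by
        rw [lintegral_indicator (measurableSet_lt measurable_const hg)]

end IsDoublingWith

end WeakType

section StrongType

lemma ennreal_rpow_eq_self_mul_rpow_sub_one {p : ℝ} (hp : 1 ≤ p) (a : ℝ≥0∞) :
    a ^ p = a * a ^ (p - 1) := by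
  calc a ^ p = a ^ (1 + (p - 1)) := by rw [add_sub_cancel]
    _ = a * a ^ (p - 1) := by
      rw [ENNReal.rpow_add_of_nonneg _ _ zero_le_one (sub_nonneg.mpr hp), ENNReal.rpow_one]

lemma setLIntegral_Ioi_rpow_eq_top (s : ℝ) :
    ∫⁻ t in Ioi (0 : ℝ), ENNReal.ofReal (t ^ s) = ∞ := by
  by_contra hfin
  refine not_integrableOn_Ioi_rpow s ⟨by fun_prop, ?_⟩
  rw [hasFiniteIntegral_iff_ofReal <| (ae_restrict_mem measurableSet_Ioi).mono
    fun t ht ↦ Real.rpow_nonneg (le_of_lt ht) s]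
  exact lt_top_iff_ne_top.mpr hfin

/-- The layer cake formula, as in Mathlib's `lintegral_rpow_eq_lintegral_meas_lt_mul` but for
functions that may take the value `∞`. -/
lemma lintegral_rpow_eq_lintegral_measure_ofReal_lt_mul {α : Type*} [MeasurableSpace α]
    (μ : Measure α) {g : α → ℝ≥0∞} (hg : Measurable g) {s : ℝ} (hs : 0 < s) :
    ∫⁻ x, g x ^ s ∂μ = ENNReal.ofReal s *
      ∫⁻ t in Ioi (0 : ℝ), μ {x | ENNReal.ofReal t < g x} * ENNReal.ofReal (t ^ (s - 1)) := by
  by_cases hfin : ∀ᵐ x ∂μ, g x ≠ ∞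
  · calc ∫⁻ x, g x ^ s ∂μ = ∫⁻ x, ENNReal.ofReal ((g x).toReal ^ s) ∂μ := by
          refine lintegral_congr_ae (hfin.mono fun x hx ↦ ?_)
          simp only [← ENNReal.ofReal_rpow_of_nonneg ENNReal.toReal_nonneg hs.le,
            ENNReal.ofReal_toReal hx]
      _ = ENNReal.ofReal s *
            ∫⁻ t in Ioi (0 : ℝ), μ {x | t < (g x).toReal} * ENNReal.ofReal (t ^ (s - 1)) :=
          lintegral_rpow_eq_lintegral_meas_lt_mul μ (.of_forall fun _ ↦ ENNReal.toReal_nonneg)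
            hg.ennreal_toReal.aemeasurable hs
      _ = _ := by
          congr 1
          refine setLIntegral_congr_fun measurableSet_Ioi fun t ht ↦ ?_
          congr 1
          refine measure_congr (hfin.mono fun x hx ↦ propext ?_)
          exact (ENNReal.ofReal_lt_iff_lt_toReal (le_of_lt ht) hx).symm
  · have htop : μ {x | g x = ∞} ≠ 0 := by simpa [ae_iff] using hfin
    have hle : μ {x | g x = ∞} * ∫⁻ t in Ioi (0 : ℝ), ENNReal.ofReal (t ^ (s - 1)) ≤
        ∫⁻ t in Ioi (0 : ℝ), μ {x | ENNReal.ofReal t < g x} * ENNReal.ofReal (t ^ (s - 1)) := by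
      rw [← lintegral_const_mul _ (by fun_prop)]
      gcongr with t x
      rintro hx
      simp [hx]
    rw [setLIntegral_Ioi_rpow_eq_top, ENNReal.mul_top htop, top_le_iff] at hle
    rw [hle, ENNReal.mul_top (by simpa)]
    refine lintegral_eq_top_of_measure_eq_top_ne_zero (hg.pow_const s).aemeasurable ?_
    simpa [ENNReal.rpow_eq_top_iff_of_pos hs] using htop

lemma lintegral_Ioi_setLIntegral_lt_mul_rpow {α : Type*} [MeasurableSpace α] (μ : Measure α)
    {g : α → ℝ≥0∞} (hg : Measurable g) {s : ℝ} (hs : 1 < s) :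
    ENNReal.ofReal (s - 1) * ∫⁻ t in Ioi (0 : ℝ),
      (∫⁻ x in {x | ENNReal.ofReal t < g x}, g x ∂μ) * ENNReal.ofReal (t ^ (s - 1 - 1)) =
      ∫⁻ x, g x ^ s ∂μ := by
  have hs' : 0 < s - 1 := sub_pos.mpr hs
  calc _ = ∫⁻ x, g x ^ (s - 1) ∂μ.withDensity g := by
        rw [lintegral_rpow_eq_lintegral_measure_ofReal_lt_mul _ hg hs']
        simp only [withDensity_apply _ (measurableSet_lt measurable_const hg)]
    _ = ∫⁻ x, g x ^ s ∂μ := by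
        rw [lintegral_withDensity_eq_lintegral_mul _ hg (hg.pow_const _)]
        exact lintegral_congr fun x ↦ (ennreal_rpow_eq_self_mul_rpow_sub_one hs.le (g x)).symm

variable {X : Type*} [PseudoMetricSpace X] [TopologicalSpace.SeparableSpace X]
  [MeasurableSpace X] [OpensMeasurableSpace X] {μ : Measure X} {D : ℝ≥0}

namespace IsDoublingWith

lemma measure_lt_half_maximalFunction_mul_rpow_le (hμ : IsDoublingWith μ D) {g : X → ℝ≥0∞}
    (hg : Measurable g) (s : ℝ) {t : ℝ} (ht : 0 < t) :
    μ {x | ENNReal.ofReal t < maximalFunction μ g x / 2} * ENNReal.ofReal (t ^ (s - 1)) ≤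
      (D ^ 3 : ℝ≥0) * ((∫⁻ x in {x | ENNReal.ofReal t < g x}, g x ∂μ) *
        ENNReal.ofReal (t ^ (s - 1 - 1))) := by
  have hpow : t ^ (s - 1) = t * t ^ (s - 1 - 1) := by
    rw [Real.rpow_sub_one ht.ne' (s - 1), mul_div_cancel₀ _ ht.ne']
  have hset : {x | ENNReal.ofReal t < maximalFunction μ g x / 2} =
      {x | 2 * ENNReal.ofReal t < maximalFunction μ g x} := by
    ext x
    simp [ENNReal.lt_div_iff_mul_lt, mul_comm]
  rw [hset, hpow, ENNReal.ofReal_mul ht.le, ← mul_assoc, ← mul_assoc, mul_comm (μ _)]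
  gcongr ?_ * _
  exact hμ.mul_measure_two_mul_lt_maximalFunction_le hg ENNReal.ofReal_ne_top

lemma exists_lintegral_maximalFunction_rpow_le (hμ : IsDoublingWith μ D) {s : ℝ} (hs : 1 < s) :
    ∃ C : ℝ≥0, ∀ g : X → ℝ≥0∞, Measurable g →
      ∫⁻ x, maximalFunction μ g x ^ s ∂μ ≤ C * ∫⁻ x, g x ^ s ∂μ := by
  have hs0 : 0 < s := by linarith
  have hs1 : ENNReal.ofReal (s - 1) ≠ 0 := by simpa using hs
  refine ⟨2 ^ s * s.toNNReal * D ^ 3 * (s - 1).toNNReal⁻¹, fun g hg ↦ ?_⟩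
  have hmeas : Measurable fun x ↦ maximalFunction μ g x / 2 :=
    (measurable_maximalFunction μ g).div_const 2
  set J : ℝ≥0∞ := ∫⁻ t in Ioi (0 : ℝ), (∫⁻ x in {x | ENNReal.ofReal t < g x}, g x ∂μ) *
    ENNReal.ofReal (t ^ (s - 1 - 1)) with hJ
  have hJs : J = (ENNReal.ofReal (s - 1))⁻¹ * ∫⁻ x, g x ^ s ∂μ := by
    rw [← lintegral_Ioi_setLIntegral_lt_mul_rpow μ hg hs,
      ENNReal.inv_mul_cancel_left hs1 ENNReal.ofReal_ne_top]
  calc ∫⁻ x, maximalFunction μ g x ^ s ∂μ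
      = 2 ^ s * ∫⁻ x, (maximalFunction μ g x / 2) ^ s ∂μ := by
        rw [← lintegral_const_mul _ (hmeas.pow_const s)]
        refine lintegral_congr fun x ↦ ?_
        rw [← ENNReal.mul_rpow_of_nonneg _ _ hs0.le,
          ENNReal.mul_div_cancel two_ne_zero ENNReal.ofNat_ne_top]
    _ = 2 ^ s * (ENNReal.ofReal s * ∫⁻ t in Ioi (0 : ℝ),
          μ {x | ENNReal.ofReal t < maximalFunction μ g x / 2} * ENNReal.ofReal (t ^ (s - 1))) := by
        rw [lintegral_rpow_eq_lintegral_measure_ofReal_lt_mul _ hmeas hs0]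
    _ ≤ 2 ^ s * (ENNReal.ofReal s * ((D ^ 3 : ℝ≥0) * J)) := by
        rw [hJ, ← lintegral_const_mul' _ _ ENNReal.coe_ne_top]
        gcongr 2 ^ s * (_ * ?_)
        exact setLIntegral_mono' measurableSet_Ioi fun t ht ↦
          hμ.measure_lt_half_maximalFunction_mul_rpow_le hg s ht
    _ = (2 ^ s * s.toNNReal * D ^ 3 * (s - 1).toNNReal⁻¹ : ℝ≥0) * ∫⁻ x, g x ^ s ∂μ := by
        rw [hJs, ENNReal.coe_mul, ENNReal.coe_inv (by simpa using hs), ENNReal.coe_mul,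
          ENNReal.coe_mul, ENNReal.coe_rpow_of_nonneg _ hs0.le]
        simp only [ENNReal.ofReal, mul_assoc, ENNReal.coe_ofNat]

end IsDoublingWith

end StrongType

section Weights

/-- The weight `w^{-1/(p-1)}`, whose averages are paired with those of `w` in the `A_p` condition;
for `p` and `q` conjugate it is the weight in `A_q` dual to `w ∈ A_p`. -/
noncomputable def dualWeight {X : Type*} (p : ℝ) (w : X → ℝ≥0∞) (x : X) : ℝ≥0∞ :=
  w x ^ (-(1 / (p - 1)))

/-- The Muckenhoupt class `A_p` with respect to a measure `μ`. Weights are extended-valued, so that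
the class is closed under `dualWeight`. -/
structure IsMuckenhouptWeight {X : Type*} [PseudoMetricSpace X] [MeasurableSpace X]
    (μ : Measure X) (p : ℝ) (w : X → ℝ≥0∞) : Prop where
  measurable : Measurable w
  ae_ne_zero : ∀ᵐ x ∂μ, w x ≠ 0
  ae_ne_top : ∀ᵐ x ∂μ, w x ≠ ∞
  exists_bound : ∃ A : ℝ≥0, ∀ (x : X) (r : ℝ), 0 < r →
    (⨍⁻ y in ball x r, w y ∂μ) * (⨍⁻ y in ball x r, dualWeight p w y ∂μ) ^ (p - 1) ≤ A

lemma dualWeight_dualWeight {X : Type*} {p q : ℝ} (hpq : p.HolderConjugate q) (w : X → ℝ≥0∞) :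
    dualWeight q (dualWeight p w) = w := by
  ext x
  have hp := hpq.sub_one_ne_zero
  have hq := hpq.symm.sub_one_ne_zero
  have hexp : -(1 / (p - 1)) * -(1 / (q - 1)) = 1 := by
    field_simp
    linarith [hpq.mul_eq_add]
  rw [dualWeight, dualWeight, ← ENNReal.rpow_mul, hexp, ENNReal.rpow_one]

lemma div_dualWeight_rpow_mul_dualWeight {X : Type*} {p : ℝ} (hp : 1 < p) {w : X → ℝ≥0∞} {x : X}
    (h0 : w x ≠ 0) (htop : w x ≠ ∞) (b : ℝ≥0∞) :
    (b / dualWeight p w x) ^ p * dualWeight p w x = b ^ p * w x := by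
  have hp1 : p - 1 ≠ 0 := by linarith
  have hexp : 1 / (p - 1) * p + -(1 / (p - 1)) = 1 := by
    field_simp
    ring
  calc (b / dualWeight p w x) ^ p * dualWeight p w x
      = b ^ p * (w x ^ (1 / (p - 1) * p) * w x ^ (-(1 / (p - 1)))) := by
        rw [dualWeight, ENNReal.rpow_neg, div_eq_mul_inv, inv_inv,
          ENNReal.mul_rpow_of_nonneg _ _ (by linarith), ENNReal.rpow_mul, mul_assoc]
    _ = b ^ p * w x := by rw [← ENNReal.rpow_add _ _ h0 htop, hexp, ENNReal.rpow_one]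

namespace IsMuckenhouptWeight

section

variable {X : Type*} [PseudoMetricSpace X] [MeasurableSpace X] {μ : Measure X} {p q : ℝ}
  {w h : X → ℝ≥0∞}

lemma measurable_dualWeight (hw : IsMuckenhouptWeight μ p w) : Measurable (dualWeight p w) :=
  hw.measurable.pow_const _

lemma ae_dualWeight_ne_zero (hw : IsMuckenhouptWeight μ p w) :
    ∀ᵐ x ∂μ, dualWeight p w x ≠ 0 := by
  filter_upwards [hw.ae_ne_zero, hw.ae_ne_top] with x h0 htop
  exact (ENNReal.rpow_pos (pos_iff_ne_zero.mpr h0) htop).ne'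

lemma ae_dualWeight_ne_top (hw : IsMuckenhouptWeight μ p w) :
    ∀ᵐ x ∂μ, dualWeight p w x ≠ ∞ := by
  filter_upwards [hw.ae_ne_zero, hw.ae_ne_top] with x h0 htop
  exact ENNReal.rpow_ne_top_of_ne_zero h0 htop

lemma dual (hw : IsMuckenhouptWeight μ p w) (hpq : p.HolderConjugate q) :
    IsMuckenhouptWeight μ q (dualWeight p w) where
  measurable := hw.measurable_dualWeight
  ae_ne_zero := hw.ae_dualWeight_ne_zero
  ae_ne_top := hw.ae_dualWeight_ne_top
  exists_bound := by
    obtain ⟨A, hA⟩ := hw.exists_bound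
    have hq : 0 ≤ q - 1 := hpq.symm.sub_one_pos.le
    have hexp : (p - 1) * (q - 1) = 1 := by linarith [hpq.mul_eq_add]
    refine ⟨A ^ (q - 1), fun x r hr ↦ ?_⟩
    rw [dualWeight_dualWeight hpq, ENNReal.coe_rpow_of_nonneg _ hq]
    refine le_of_eq_of_le ?_ (ENNReal.rpow_le_rpow (hA x r hr) hq)
    rw [ENNReal.mul_rpow_of_nonneg _ _ hq, ← ENNReal.rpow_mul, hexp, ENNReal.rpow_one, mul_comm]

lemma lintegral_div_dualWeight_rpow_withDensity (hw : IsMuckenhouptWeight μ p w) (hp : 1 < p)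
    (hh : Measurable h) :
    ∫⁻ x, (h x / dualWeight p w x) ^ p ∂μ.withDensity (dualWeight p w) =
      ∫⁻ x, h x ^ p ∂μ.withDensity w := by
  have hhσ : Measurable fun x ↦ h x / dualWeight p w x := hh.div hw.measurable_dualWeight
  rw [lintegral_withDensity_eq_lintegral_mul _ hw.measurable_dualWeight (hhσ.pow_const p),
    lintegral_withDensity_eq_lintegral_mul _ hw.measurable (hh.pow_const p)]
  refine lintegral_congr_ae ?_
  filter_upwards [hw.ae_ne_zero, hw.ae_ne_top] with x h0 htop
  simpa only [Pi.mul_apply, mul_comm] using div_dualWeight_rpow_mul_dualWeight hp h0 htop (h x)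

lemma lintegral_rpow_sub_one_div_rpow_withDensity (hw : IsMuckenhouptWeight μ p w)
    (hpq : p.HolderConjugate q) (hh : Measurable h) :
    ∫⁻ x, (h x ^ (p - 1) / w x) ^ q ∂μ.withDensity w =
      ∫⁻ x, h x ^ p ∂μ.withDensity (dualWeight p w) := by
  have hdual := (hw.dual hpq).lintegral_div_dualWeight_rpow_withDensity hpq.symm.lt
    (hh.pow_const (p - 1))
  simpa only [dualWeight_dualWeight hpq, ← ENNReal.rpow_mul, hpq.sub_one_mul_conj] using hdual

end

section Ball

variable {X : Type*} [PseudoMetricSpace X] [MeasurableSpace X] {μ : Measure X}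
  [IsLocallyFiniteMeasure μ] [μ.IsOpenPosMeasure] {D : ℝ≥0} {p : ℝ} {w h : X → ℝ≥0∞}

lemma setLAverage_ball_ne_top (hw : IsMuckenhouptWeight μ p w) (hμ : IsDoublingWith μ D)
    (hp : 1 < p) (x : X) {r : ℝ} (hr : 0 < r) : ⨍⁻ y in ball x r, w y ∂μ ≠ ∞ := by
  obtain ⟨A, hA⟩ := hw.exists_bound
  intro htop
  have hdual : (⨍⁻ y in ball x r, dualWeight p w y ∂μ) ^ (p - 1) ≠ 0 := by
    rw [ne_eq, ENNReal.rpow_eq_zero_iff_of_pos (by linarith)]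
    exact setLAverage_ne_zero hw.measurable_dualWeight hw.ae_dualWeight_ne_zero
      (measure_ball_pos μ x hr).ne' (hμ.measure_ball_ne_top x r)
  have hbound := hA x r hr
  rw [htop, ENNReal.top_mul hdual] at hbound
  exact ENNReal.coe_ne_top (top_le_iff.mp hbound)

variable [OpensMeasurableSpace X]

lemma withDensity_ball_ne_top (hw : IsMuckenhouptWeight μ p w) (hμ : IsDoublingWith μ D)
    (hp : 1 < p) (x : X) {r : ℝ} (hr : 0 < r) : μ.withDensity w (ball x r) ≠ ∞ := by
  have hfin := hμ.measure_ball_ne_top x r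
  rw [withDensity_apply _ measurableSet_ball, ← measure_mul_setLAverage _ hfin]
  exact ENNReal.mul_ne_top hfin (hw.setLAverage_ball_ne_top hμ hp x hr)

lemma setLAverage_eq_mul_setLAverage_withDensity (hw : IsMuckenhouptWeight μ p w)
    (hμ : IsDoublingWith μ D) (hp : 1 < p) (hh : Measurable h) (x : X) {r : ℝ} (hr : 0 < r) :
    ⨍⁻ y in ball x r, h y ∂μ =
      (⨍⁻ y in ball x r, h y / w y ∂μ.withDensity w) * ⨍⁻ y in ball x r, w y ∂μ := by
  have hhw : Measurable fun y ↦ h y / w y := hh.div hw.measurable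
  rw [setLAverage_withDensity_mul_setLAverage hw.measurable hhw
    measurableSet_ball (hw.withDensity_ball_ne_top hμ hp x hr)]
  refine laverage_congr (ae_restrict_of_ae ?_)
  filter_upwards [hw.ae_ne_zero, hw.ae_ne_top] with y h0 htop
  exact (ENNReal.div_mul_cancel h0 htop).symm

/-- With `σ` the dual weight, this is Jensen's inequality for `h / σ` in the measure `σ μ`; the
`A_p` condition absorbs the leftover averages of `w` and `σ`. -/
lemma exists_rpow_setLAverage_le (hw : IsMuckenhouptWeight μ p w) (hμ : IsDoublingWith μ D)
    (hp : 1 < p) :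
    ∃ A : ℝ≥0, ∀ h : X → ℝ≥0∞, Measurable h → ∀ (x : X) (r : ℝ), 0 < r →
      (⨍⁻ y in ball x r, h y ∂μ) ^ p ≤ A * ⨍⁻ y in ball x r, h y ^ p ∂μ.withDensity w := by
  obtain ⟨A, hA⟩ := hw.exists_bound
  have hpq := Real.HolderConjugate.conjExponent hp
  refine ⟨A, fun h hh x r hr ↦ ?_⟩
  set σ := dualWeight p w
  have hσ := hw.dual hpq
  have hhσ : Measurable fun y ↦ h y / σ y := hh.div hσ.measurable
  have hchange : (⨍⁻ y in ball x r, (h y / σ y) ^ p ∂μ.withDensity σ) * ⨍⁻ y in ball x r, σ y ∂μ =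
      (⨍⁻ y in ball x r, h y ^ p ∂μ.withDensity w) * ⨍⁻ y in ball x r, w y ∂μ := by
    rw [setLAverage_withDensity_mul_setLAverage hσ.measurable (hhσ.pow_const p) measurableSet_ball
        (hσ.withDensity_ball_ne_top hμ hpq.symm.lt x hr),
      setLAverage_withDensity_mul_setLAverage hw.measurable (hh.pow_const p) measurableSet_ball
        (hw.withDensity_ball_ne_top hμ hp x hr)]
    refine laverage_congr (ae_restrict_of_ae ?_)
    filter_upwards [hw.ae_ne_zero, hw.ae_ne_top] with y h0 htop
    exact div_dualWeight_rpow_mul_dualWeight hp h0 htop (h y)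
  calc (⨍⁻ y in ball x r, h y ∂μ) ^ p
      = (⨍⁻ y in ball x r, h y / σ y ∂μ.withDensity σ) ^ p * (⨍⁻ y in ball x r, σ y ∂μ) ^ p := by
        rw [hσ.setLAverage_eq_mul_setLAverage_withDensity hμ hpq.symm.lt hh x hr,
          ENNReal.mul_rpow_of_nonneg _ _ (by linarith)]
    _ ≤ (⨍⁻ y in ball x r, (h y / σ y) ^ p ∂μ.withDensity σ) *
          ((⨍⁻ y in ball x r, σ y ∂μ) * (⨍⁻ y in ball x r, σ y ∂μ) ^ (p - 1)) := by
        rw [← ennreal_rpow_eq_self_mul_rpow_sub_one hp.le]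
        gcongr
        exact rpow_setLAverage_le hhσ.aemeasurable hp.le
    _ = ((⨍⁻ y in ball x r, w y ∂μ) * (⨍⁻ y in ball x r, σ y ∂μ) ^ (p - 1)) *
          ⨍⁻ y in ball x r, h y ^ p ∂μ.withDensity w := by
        rw [← mul_assoc, hchange]
        ring
    _ ≤ A * ⨍⁻ y in ball x r, h y ^ p ∂μ.withDensity w := by
        gcongr
        exact hA x r hr

lemma exists_isDoublingWith_withDensity (hw : IsMuckenhouptWeight μ p w)
    (hμ : IsDoublingWith μ D) (hp : 1 < p) :
    ∃ D' : ℝ≥0, IsDoublingWith (μ.withDensity w) D' := by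
  obtain ⟨A, hA⟩ := hw.exists_rpow_setLAverage_le hμ hp
  have hp0 : 0 < p := by linarith
  refine ⟨D ^ p * A, fun x r hr ↦ ?_⟩
  set B := ball x r
  set B' := ball x (2 * r)
  set ν := μ.withDensity w
  let χ : X → ℝ≥0∞ := B.indicator 1
  have hχ : Measurable χ := measurable_one.indicator measurableSet_ball
  have hχB : ⨍⁻ y in B, χ y ∂μ = 1 := by
    rw [setLAverage_congr_fun measurableSet_ball (g := 1) fun y hy ↦ indicator_of_mem hy _]
    exact setLAverage_one (measure_ball_pos μ x hr).ne' (hμ.measure_ball_ne_top x r)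
  have hχp : ⨍⁻ y in B', χ y ^ p ∂ν = ν B / ν B' := by
    have hind (y : X) : χ y ^ p = χ y := by
      by_cases hy : y ∈ B <;> simp [χ, hy, hp0]
    simp only [hind, χ]
    rw [setLAverage_eq, lintegral_indicator_one measurableSet_ball,
      Measure.restrict_apply measurableSet_ball, inter_eq_left.mpr (ball_subset_ball (by linarith))]
  have hone : 1 ≤ (D ^ p * A : ℝ≥0) * ν B / ν B' := by
    calc (1 : ℝ≥0∞) = (⨍⁻ y in B, χ y ∂μ) ^ p := by rw [hχB, ENNReal.one_rpow]
      _ ≤ (D * ⨍⁻ y in B', χ y ∂μ) ^ p := by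
          gcongr
          exact setLAverage_le_mul_of_subset (ball_subset_ball (by linarith)) (hμ x r hr)
      _ ≤ D ^ p * (A * (ν B / ν B')) := by
          rw [ENNReal.mul_rpow_of_nonneg _ _ hp0.le, ← hχp]
          gcongr
          exact hA χ hχ x (2 * r) (by positivity)
      _ = (D ^ p * A : ℝ≥0) * ν B / ν B' := by
          rw [ENNReal.coe_mul, ENNReal.coe_rpow_of_nonneg _ hp0.le]
          simp only [mul_div_assoc, mul_assoc]
  simpa only [one_mul] using ENNReal.mul_le_of_le_div hone

end Ball

end IsMuckenhouptWeight

end Weights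

section MuckenhouptTheorem

namespace IsMuckenhouptWeight

variable {X : Type*} [PseudoMetricSpace X] [MeasurableSpace X] [OpensMeasurableSpace X]
  {μ : Measure X} [IsLocallyFiniteMeasure μ] [μ.IsOpenPosMeasure] {D D' : ℝ≥0} {p : ℝ}
  {w h : X → ℝ≥0∞}

lemma setLAverage_ball_rpow_sub_one_le (hw : IsMuckenhouptWeight μ p w)
    (hμ : IsDoublingWith μ D) (hσμ : IsDoublingWith (μ.withDensity (dualWeight p w)) D')
    (hp : 1 < p) (hh : Measurable h) (x : X) {r : ℝ} (hr : 0 < r) :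
    (⨍⁻ y in ball x r, h y ∂μ) ^ (p - 1) ≤ ((D' ^ 2) ^ (p - 1) : ℝ≥0) *
      ((⨍⁻ y in ball x r, w y ∂μ) * (⨍⁻ y in ball x r, dualWeight p w y ∂μ) ^ (p - 1)) *
      ⨍⁻ y in ball x r, maximalFunction (μ.withDensity (dualWeight p w))
        (fun z ↦ h z / dualWeight p w z) y ^ (p - 1) / w y ∂μ.withDensity w := by
  have hpq := Real.HolderConjugate.conjExponent hp
  have hp1 : 0 ≤ p - 1 := hpq.sub_one_pos.le
  set σ := dualWeight p w
  have hσ : IsMuckenhouptWeight μ _ σ := hw.dual hpq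
  set τ := μ.withDensity σ
  set u : X → ℝ≥0∞ := fun y ↦ maximalFunction τ (fun z ↦ h z / σ z) y ^ (p - 1)
  have hu : Measurable u := (measurable_maximalFunction τ _).pow_const _
  obtain ⟨y, hy, hyu⟩ := exists_le_setLAverage (measure_ball_pos μ x hr).ne'
    (hμ.measure_ball_ne_top x r) hu.aemeasurable.restrict
  calc (⨍⁻ z in ball x r, h z ∂μ) ^ (p - 1)
      = (⨍⁻ z in ball x r, h z / σ z ∂τ) ^ (p - 1) * (⨍⁻ z in ball x r, σ z ∂μ) ^ (p - 1) := by
        rw [hσ.setLAverage_eq_mul_setLAverage_withDensity hμ hpq.symm.lt hh x hr,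
          ENNReal.mul_rpow_of_nonneg _ _ hp1]
    _ ≤ ((D' ^ 2 : ℝ≥0) * maximalFunction τ (fun z ↦ h z / σ z) y) ^ (p - 1) *
          (⨍⁻ z in ball x r, σ z ∂μ) ^ (p - 1) := by
        gcongr
        exact hσμ.setLAverage_ball_le_maximalFunction_of_mem hy
    _ ≤ ((D' ^ 2) ^ (p - 1) : ℝ≥0) * (⨍⁻ z in ball x r, u z ∂μ) *
          (⨍⁻ z in ball x r, σ z ∂μ) ^ (p - 1) := by
        rw [ENNReal.mul_rpow_of_nonneg _ _ hp1, ENNReal.coe_rpow_of_nonneg _ hp1]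
        gcongr
    _ = ((D' ^ 2) ^ (p - 1) : ℝ≥0) * ((⨍⁻ z in ball x r, w z ∂μ) *
          (⨍⁻ z in ball x r, σ z ∂μ) ^ (p - 1)) *
          ⨍⁻ z in ball x r, u z / w z ∂μ.withDensity w := by
        rw [hw.setLAverage_eq_mul_setLAverage_withDensity hμ hp hu x hr]
        ring

lemma exists_maximalFunction_rpow_sub_one_le (hw : IsMuckenhouptWeight μ p w)
    (hμ : IsDoublingWith μ D) (hp : 1 < p) :
    ∃ K : ℝ≥0, ∀ h : X → ℝ≥0∞, Measurable h → ∀ x, maximalFunction μ h x ^ (p - 1) ≤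
      K * maximalFunction (μ.withDensity w) (fun y ↦
        maximalFunction (μ.withDensity (dualWeight p w)) (fun z ↦ h z / dualWeight p w z) y ^
          (p - 1) / w y) x := by
  have hpq := Real.HolderConjugate.conjExponent hp
  obtain ⟨A, hA⟩ := hw.exists_bound
  obtain ⟨D', hσμ⟩ := (hw.dual hpq).exists_isDoublingWith_withDensity hμ hpq.symm.lt
  refine ⟨(D' ^ 2) ^ (p - 1) * A, fun h hh x ↦ ?_⟩
  rw [← ENNReal.le_rpow_inv_iff hpq.sub_one_pos]
  refine iSup_le fun ⟨r, hr⟩ ↦ (ENNReal.le_rpow_inv_iff hpq.sub_one_pos).mpr ?_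
  refine (hw.setLAverage_ball_rpow_sub_one_le hμ hσμ hp hh x hr).trans ?_
  rw [ENNReal.coe_mul]
  gcongr
  · exact hA x r hr
  · exact setLAverage_ball_le_maximalFunction x hr

variable [TopologicalSpace.SeparableSpace X]

/-- Lerner's proof: raise the pointwise bound of `exists_maximalFunction_rpow_sub_one_le` to the
conjugate exponent and use that the maximal functions of both weighted measures are bounded. -/
theorem exists_lintegral_maximalFunction_rpow_le (hw : IsMuckenhouptWeight μ p w)
    (hμ : IsDoublingWith μ D) (hp : 1 < p) :
    ∃ C : ℝ≥0, ∀ h : X → ℝ≥0∞, Measurable h →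
      ∫⁻ x, maximalFunction μ h x ^ p ∂μ.withDensity w ≤ C * ∫⁻ x, h x ^ p ∂μ.withDensity w := by
  have hpq := Real.HolderConjugate.conjExponent hp
  set q := p.conjExponent
  have hmul : (p - 1) * q = p := hpq.sub_one_mul_conj
  set σ := dualWeight p w
  have hσ : IsMuckenhouptWeight μ q σ := hw.dual hpq
  obtain ⟨K, hK⟩ := hw.exists_maximalFunction_rpow_sub_one_le hμ hp
  obtain ⟨Dν, hν⟩ := hw.exists_isDoublingWith_withDensity hμ hp
  obtain ⟨Dτ, hτ⟩ := hσ.exists_isDoublingWith_withDensity hμ hpq.symm.lt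
  obtain ⟨Cν, hCν⟩ := hν.exists_lintegral_maximalFunction_rpow_le hpq.symm.lt
  obtain ⟨Cτ, hCτ⟩ := hτ.exists_lintegral_maximalFunction_rpow_le hp
  set ν := μ.withDensity w
  set τ := μ.withDensity σ
  refine ⟨K ^ q * Cν * Cτ, fun h hh ↦ ?_⟩
  set v : X → ℝ≥0∞ := maximalFunction τ fun z ↦ h z / σ z
  have hv : Measurable v := measurable_maximalFunction τ _
  calc ∫⁻ x, maximalFunction μ h x ^ p ∂ν
      ≤ ∫⁻ x, (K : ℝ≥0∞) ^ q * maximalFunction ν (fun y ↦ v y ^ (p - 1) / w y) x ^ q ∂ν := by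
        gcongr with x
        calc maximalFunction μ h x ^ p = (maximalFunction μ h x ^ (p - 1)) ^ q := by
              rw [← ENNReal.rpow_mul, hmul]
          _ ≤ (K * maximalFunction ν (fun y ↦ v y ^ (p - 1) / w y) x) ^ q :=
              ENNReal.rpow_le_rpow (hK h hh x) hpq.symm.nonneg
          _ = _ := ENNReal.mul_rpow_of_nonneg _ _ hpq.symm.nonneg
    _ = (K ^ q : ℝ≥0) * ∫⁻ x, maximalFunction ν (fun y ↦ v y ^ (p - 1) / w y) x ^ q ∂ν := by
        rw [lintegral_const_mul _ ((measurable_maximalFunction ν _).pow_const q),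
          ENNReal.coe_rpow_of_nonneg _ hpq.symm.nonneg]
    _ ≤ (K ^ q : ℝ≥0) * (Cν * ∫⁻ x, v x ^ p ∂τ) := by
        rw [← hw.lintegral_rpow_sub_one_div_rpow_withDensity hpq hv]
        gcongr
        exact hCν _ ((hv.pow_const _).div hw.measurable)
    _ ≤ (K ^ q : ℝ≥0) * (Cν * (Cτ * ∫⁻ x, (h x / σ x) ^ p ∂τ)) := by
        gcongr
        exact hCτ _ (hh.div hσ.measurable)
    _ = (K ^ q * Cν * Cτ : ℝ≥0) * ∫⁻ x, h x ^ p ∂ν := by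
        rw [hw.lintegral_div_dualWeight_rpow_withDensity hp hh]
        push_cast
        ring

end IsMuckenhouptWeight

end MuckenhouptTheorem

section LocalBounds

variable {X : Type*} [PseudoMetricSpace X] [MeasurableSpace X] [OpensMeasurableSpace X]
  {μ : Measure X} {D : ℝ≥0}

namespace IsDoublingWith

/-- For `x ∈ ball a r`, balls around `x` of radius at most `r` only see `g` on `ball a (2 * r)`,
and larger ones are comparable to balls centred at `a`. -/
lemma maximalFunction_le_maximalFunction_indicator_add (hμ : IsDoublingWith μ D)
    {g : X → ℝ≥0∞} {a x : X} {r : ℝ} (hx : x ∈ ball a r) {c : ℝ≥0∞}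
    (hc : ∀ t, r ≤ t → ⨍⁻ y in ball a t, g y ∂μ ≤ c) :
    maximalFunction μ g x ≤
      maximalFunction μ ((ball a (2 * r)).indicator g) x + (D ^ 2 : ℝ≥0) * c := by
  have hxa : dist x a < r := hx
  refine iSup_le fun ⟨ρ, hρ⟩ ↦ ?_
  rcases le_or_gt ρ r with hρr | hrρ
  · have hsub : ball x ρ ⊆ ball a (2 * r) := ball_subset_ball' (by linarith)
    refine le_add_right (le_of_eq_of_le ?_ (setLAverage_ball_le_maximalFunction x hρ))
    exact setLAverage_congr_fun measurableSet_ball fun y hy ↦ (indicator_of_mem (hsub hy) g).symm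
  · have hρ0 : 0 < ρ := hρ
    calc ⨍⁻ y in ball x ρ, g y ∂μ ≤ (D ^ 2 : ℝ≥0) * ⨍⁻ y in ball a (2 * ρ), g y ∂μ :=
          hμ.setLAverage_ball_le hρ0 (by linarith) (by linarith)
      _ ≤ (D ^ 2 : ℝ≥0) * c := by
          gcongr
          exact hc _ (by linarith)
      _ ≤ _ := le_add_self

lemma maximalFunction_rpow_le_indicator_rpow_add (hμ : IsDoublingWith μ D) {g : X → ℝ≥0∞}
    {a x : X} {r : ℝ} (hx : x ∈ ball a r) {p : ℝ} (hp : 1 ≤ p) {b : ℝ≥0∞}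
    (hb : ∀ t, r ≤ t → (⨍⁻ y in ball a t, g y ∂μ) ^ p ≤ b) :
    maximalFunction μ g x ^ p ≤ 2 ^ (p - 1) *
      (maximalFunction μ ((ball a (2 * r)).indicator g) x ^ p + ((D ^ 2) ^ p : ℝ≥0) * b) := by
  have hp0 : 0 < p := by linarith
  calc maximalFunction μ g x ^ p
      ≤ (maximalFunction μ ((ball a (2 * r)).indicator g) x + (D ^ 2 : ℝ≥0) * b ^ p⁻¹) ^ p := by
        gcongr
        exact hμ.maximalFunction_le_maximalFunction_indicator_add hx
          fun t ht ↦ (ENNReal.le_rpow_inv_iff hp0).mpr (hb t ht)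
    _ ≤ 2 ^ (p - 1) * (maximalFunction μ ((ball a (2 * r)).indicator g) x ^ p +
          ((D ^ 2 : ℝ≥0) * b ^ p⁻¹) ^ p) :=
        ENNReal.rpow_add_le_mul_rpow_add_rpow _ _ hp
    _ = _ := by
        rw [ENNReal.mul_rpow_of_nonneg _ _ hp0.le, ENNReal.rpow_inv_rpow hp0.ne',
          ENNReal.coe_rpow_of_nonneg _ hp0.le]

end IsDoublingWith

namespace IsMuckenhouptWeight

variable [TopologicalSpace.SeparableSpace X] [IsLocallyFiniteMeasure μ] [μ.IsOpenPosMeasure]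
  {p : ℝ} {w : X → ℝ≥0∞}

lemma exists_setLIntegral_maximalFunction_indicator_rpow_le (hw : IsMuckenhouptWeight μ p w)
    (hμ : IsDoublingWith μ D) (hp : 1 < p) :
    ∃ C : ℝ≥0, ∀ g : X → ℝ≥0∞, Measurable g → ∀ (a : X) {r : ℝ}, 0 < r →
      ∫⁻ x, maximalFunction μ ((ball a (2 * r)).indicator g) x ^ p ∂μ.withDensity w ≤
        C * μ.withDensity w (ball a r) *
          ⨍⁻ x in ball a (2 * r), g x ^ p ∂μ.withDensity w := by
  obtain ⟨C, hC⟩ := hw.exists_lintegral_maximalFunction_rpow_le hμ hp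
  obtain ⟨D', hD'⟩ := hw.exists_isDoublingWith_withDensity hμ hp
  refine ⟨C * D', fun g hg a r hr ↦ ?_⟩
  set ν := μ.withDensity w
  have hindicator (x : X) : (ball a (2 * r)).indicator g x ^ p =
      (ball a (2 * r)).indicator (fun x ↦ g x ^ p) x := by
    by_cases hx : x ∈ ball a (2 * r) <;> simp [hx, zero_lt_one.trans hp]
  calc ∫⁻ x, maximalFunction μ ((ball a (2 * r)).indicator g) x ^ p ∂ν
      ≤ C * ∫⁻ x, (ball a (2 * r)).indicator g x ^ p ∂ν := hC _ (hg.indicator measurableSet_ball)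
    _ = C * (ν (ball a (2 * r)) * ⨍⁻ x in ball a (2 * r), g x ^ p ∂ν) := by
        simp only [hindicator]
        rw [lintegral_indicator measurableSet_ball, measure_mul_setLAverage _
          (hw.withDensity_ball_ne_top hμ hp a (by positivity))]
    _ ≤ C * (D' * ν (ball a r) * ⨍⁻ x in ball a (2 * r), g x ^ p ∂ν) := by
        gcongr
        exact hD' a r hr
    _ = _ := by
        push_cast
        ring

lemma exists_setLAverage_maximalFunction_rpow_le (hw : IsMuckenhouptWeight μ p w)
    (hμ : IsDoublingWith μ D) (hp : 1 < p) :
    ∃ K : ℝ≥0, ∀ g : X → ℝ≥0∞, Measurable g → ∀ (a : X) {r : ℝ}, 0 < r → ∀ b : ℝ≥0∞,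
      (∀ t, r ≤ t → ⨍⁻ x in ball a t, g x ^ p ∂μ.withDensity w ≤ b) →
      ⨍⁻ x in ball a r, maximalFunction μ g x ^ p ∂μ.withDensity w ≤ K * b := by
  obtain ⟨A, hA⟩ := hw.exists_rpow_setLAverage_le hμ hp
  obtain ⟨C, hC⟩ := hw.exists_setLIntegral_maximalFunction_indicator_rpow_le hμ hp
  refine ⟨2 ^ (p - 1) * (C + (D ^ 2) ^ p * A), fun g hg a r hr b hb ↦ ?_⟩
  set ν := μ.withDensity w
  set g₁ := (ball a (2 * r)).indicator g
  have hAb (t : ℝ) (ht : r ≤ t) : (⨍⁻ y in ball a t, g y ∂μ) ^ p ≤ A * b := by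
    refine (hA g hg a t (hr.trans_le ht)).trans ?_
    gcongr
    exact hb t ht
  rw [setLAverage_eq]
  refine ENNReal.div_le_of_le_mul ?_
  calc ∫⁻ x in ball a r, maximalFunction μ g x ^ p ∂ν
      ≤ ∫⁻ x in ball a r,
          2 ^ (p - 1) * (maximalFunction μ g₁ x ^ p + ((D ^ 2) ^ p : ℝ≥0) * (A * b)) ∂ν :=
        setLIntegral_mono' measurableSet_ball fun x hx ↦
          hμ.maximalFunction_rpow_le_indicator_rpow_add hx hp.le hAb
    _ = 2 ^ (p - 1) * (∫⁻ x in ball a r, maximalFunction μ g₁ x ^ p ∂ν +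
          ((D ^ 2) ^ p : ℝ≥0) * (A * b) * ν (ball a r)) := by
        rw [lintegral_const_mul' _ _ (by finiteness), lintegral_add_right _ measurable_const,
          setLIntegral_const]
    _ ≤ 2 ^ (p - 1) *
          (C * ν (ball a r) * b + ((D ^ 2) ^ p : ℝ≥0) * (A * b) * ν (ball a r)) := by
        gcongr
        refine (setLIntegral_le_lintegral _ _).trans ((hC g hg a hr).trans ?_)
        gcongr
        exact hb _ (by linarith)
    _ = (2 ^ (p - 1) * (C + (D ^ 2) ^ p * A) : ℝ≥0) * b * ν (ball a r) := by
        rw [ENNReal.coe_mul, ENNReal.coe_add, ENNReal.coe_mul,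
          ENNReal.coe_rpow_of_nonneg 2 (by linarith), ENNReal.coe_ofNat]
        ring

end IsMuckenhouptWeight

end LocalBounds

section Morrey

lemma le_mul_setLIntegral_Ioi_mul_inv {φ : ℝ → ℝ≥0∞} {L : ℝ≥0} {t : ℝ} (ht : 0 < t)
    (hφ : ∀ s, t ≤ s → s ≤ 2 * t → φ t ≤ L * φ s) :
    φ t ≤ (2 * L : ℝ≥0) * ∫⁻ s in Ioi t, φ s * ENNReal.ofReal s⁻¹ := by
  calc φ t = ∫⁻ _ in Ioc t (2 * t), φ t * ENNReal.ofReal t⁻¹ := by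
        rw [setLIntegral_const, Real.volume_Ioc, mul_assoc,
          ← ENNReal.ofReal_mul (inv_nonneg.mpr ht.le),
          show t⁻¹ * (2 * t - t) = 1 by field_simp; ring, ENNReal.ofReal_one, mul_one]
    _ ≤ ∫⁻ s in Ioc t (2 * t), (2 * L : ℝ≥0) * (φ s * ENNReal.ofReal s⁻¹) := by
        refine setLIntegral_mono' measurableSet_Ioc fun s ⟨hts, hst⟩ ↦ ?_
        have hinv : ENNReal.ofReal t⁻¹ ≤ 2 * ENNReal.ofReal s⁻¹ := by
          rw [← ENNReal.ofReal_ofNat 2, ← ENNReal.ofReal_mul zero_le_two]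
          refine ENNReal.ofReal_le_ofReal ?_
          have hs : 0 < s := ht.trans hts
          field_simp
          linarith
        calc φ t * ENNReal.ofReal t⁻¹ ≤ L * φ s * (2 * ENNReal.ofReal s⁻¹) := by
              gcongr
              exact hφ s hts.le hst
          _ = _ := by
              push_cast
              ring
    _ ≤ ∫⁻ s in Ioi t, (2 * L : ℝ≥0) * (φ s * ENNReal.ofReal s⁻¹) :=
        lintegral_mono_set Ioc_subset_Ioi_self
    _ = _ := lintegral_const_mul' _ _ ENNReal.coe_ne_top

/-- The generalized Morrey norm with respect to a measure `ν`; the factor `ν (ball a r) ^ (-1 / p)`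
is absorbed into the average. -/
noncomputable def generalizedMorreyNorm {X : Type*} [PseudoMetricSpace X] [MeasurableSpace X]
    (ν : Measure X) (p : ℝ) (ψ : X → ℝ → ℝ≥0) (g : X → ℝ≥0∞) : ℝ≥0∞ :=
  ⨆ (a : X) (r : Ioi (0 : ℝ)), (ψ a r : ℝ≥0∞)⁻¹ * (⨍⁻ x in ball a r.1, g x ^ p ∂ν) ^ (1 / p)

variable {X : Type*} [PseudoMetricSpace X] [MeasurableSpace X] {ν : Measure X} {p : ℝ}
  {ψ ψ₁ ψ₂ : X → ℝ → ℝ≥0} {g : X → ℝ≥0∞} {N : ℝ≥0∞}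

lemma generalizedMorreyNorm_le_iff (hN : N ≠ ∞) :
    generalizedMorreyNorm ν p ψ g ≤ N ↔
      ∀ a r, 0 < r → (⨍⁻ x in ball a r, g x ^ p ∂ν) ^ (1 / p) ≤ ψ a r * N := by
  simp only [generalizedMorreyNorm, iSup_le_iff, Subtype.forall, mem_Ioi]
  refine forall₃_congr fun a r hr ↦ ?_
  rw [mul_comm, ← div_eq_mul_inv,
    ENNReal.div_le_iff_le_mul (.inr hN) (.inl ENNReal.coe_ne_top), mul_comm N]

lemma IsDoublingWith.setLAverage_ball_rpow_le_setLIntegral {D : ℝ≥0} (hν : IsDoublingWith ν D)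
    {e : ℝ} (he : 0 ≤ e) (a : X) {t : ℝ} (ht : 0 < t) :
    (⨍⁻ x in ball a t, g x ∂ν) ^ e ≤ (2 * D ^ e : ℝ≥0) *
      ∫⁻ s in Ioi t, (⨍⁻ x in ball a s, g x ∂ν) ^ e * ENNReal.ofReal s⁻¹ := by
  refine le_mul_setLIntegral_Ioi_mul_inv (φ := fun s ↦ (⨍⁻ x in ball a s, g x ∂ν) ^ e) ht
    fun s hts hst ↦ ?_
  rw [ENNReal.coe_rpow_of_nonneg _ he, ← ENNReal.mul_rpow_of_nonneg _ _ he]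
  gcongr
  simpa using hν.setLAverage_ball_le (k := 1) (x := a) (y := a) (g := g) ht (by simpa) (by simpa)

lemma IsDoublingWith.exists_setLAverage_ball_rpow_le {D : ℝ≥0} (hν : IsDoublingWith ν D)
    (hp : 0 < p) {C : ℝ≥0}
    (hψ : ∀ a r, 0 < r → ∫⁻ t in Ioi r, ψ₁ a t * ENNReal.ofReal t⁻¹ ≤ C * ψ₂ a r) :
    ∃ L : ℝ≥0, ∀ g, generalizedMorreyNorm ν p ψ₁ g ≠ ∞ → ∀ (a : X) {r t : ℝ}, 0 < r → r ≤ t →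
      (⨍⁻ x in ball a t, g x ^ p ∂ν) ^ (1 / p) ≤ L * ψ₂ a r * generalizedMorreyNorm ν p ψ₁ g := by
  refine ⟨2 * D ^ (1 / p) * C, fun g hN a r t hr hrt ↦ ?_⟩
  set N := generalizedMorreyNorm ν p ψ₁ g
  have hg := (generalizedMorreyNorm_le_iff hN).mp le_rfl
  have ht : 0 < t := hr.trans_le hrt
  calc (⨍⁻ x in ball a t, g x ^ p ∂ν) ^ (1 / p)
      ≤ (2 * D ^ (1 / p) : ℝ≥0) *
          ∫⁻ s in Ioi t, (⨍⁻ x in ball a s, g x ^ p ∂ν) ^ (1 / p) * ENNReal.ofReal s⁻¹ :=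
        hν.setLAverage_ball_rpow_le_setLIntegral (by positivity) a ht
    _ ≤ (2 * D ^ (1 / p) : ℝ≥0) * ∫⁻ s in Ioi t, N * (ψ₁ a s * ENNReal.ofReal s⁻¹) := by
        gcongr _ * ?_
        refine setLIntegral_mono' measurableSet_Ioi fun s hs ↦ ?_
        rw [← mul_assoc, mul_comm N]
        gcongr
        exact hg a s (ht.trans (mem_Ioi.mp hs))
    _ ≤ (2 * D ^ (1 / p) : ℝ≥0) * (N * (C * ψ₂ a r)) := by
        rw [lintegral_const_mul' _ _ hN]
        gcongr
        exact (lintegral_mono_set (Ioi_subset_Ioi hrt)).trans (hψ a r hr)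
    _ = _ := by
        push_cast
        ring

variable [TopologicalSpace.SeparableSpace X] [OpensMeasurableSpace X]

theorem statement10_general {μ : Measure X} [IsLocallyFiniteMeasure μ] [μ.IsOpenPosMeasure]
    {D : ℝ≥0} (hμ : IsDoublingWith μ D) (hp : 1 < p) {w : X → ℝ≥0∞}
    (hw : IsMuckenhouptWeight μ p w) {C : ℝ≥0}
    (hψ : ∀ a r, 0 < r → ∫⁻ t in Ioi r, ψ₁ a t * ENNReal.ofReal t⁻¹ ≤ C * ψ₂ a r) :
    ∃ C' : ℝ≥0, 0 < C' ∧ ∀ g : X → ℝ≥0∞, Measurable g →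
      generalizedMorreyNorm (μ.withDensity w) p ψ₁ g < ∞ →
      generalizedMorreyNorm (μ.withDensity w) p ψ₂ (maximalFunction μ g) ≤
        C' * generalizedMorreyNorm (μ.withDensity w) p ψ₁ g := by
  have hp0 : 0 < p := by linarith
  obtain ⟨K, hK⟩ := hw.exists_setLAverage_maximalFunction_rpow_le hμ hp
  obtain ⟨D', hν⟩ := hw.exists_isDoublingWith_withDensity hμ hp
  obtain ⟨L, hL⟩ := hν.exists_setLAverage_ball_rpow_le hp0 hψ
  refine ⟨K ^ (1 / p) * L + 1, by positivity, fun g hg hN ↦ ?_⟩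
  set ν := μ.withDensity w
  set N := generalizedMorreyNorm ν p ψ₁ g
  rw [generalizedMorreyNorm_le_iff (ENNReal.mul_ne_top ENNReal.coe_ne_top hN.ne)]
  intro a r hr
  have hlocal (t : ℝ) (ht : r ≤ t) : ⨍⁻ x in ball a t, g x ^ p ∂ν ≤ (L * ψ₂ a r * N) ^ p := by
    rw [← ENNReal.rpow_inv_le_iff hp0, ← one_div]
    exact hL g hN.ne a hr ht
  calc (⨍⁻ x in ball a r, maximalFunction μ g x ^ p ∂ν) ^ (1 / p)
      ≤ (K * (L * ψ₂ a r * N) ^ p) ^ (1 / p) := by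
        gcongr
        exact hK g hg a hr _ hlocal
    _ = (K ^ (1 / p) * L : ℝ≥0) * (ψ₂ a r * N) := by
        rw [one_div, ENNReal.mul_rpow_of_nonneg _ _ (by positivity), ENNReal.rpow_rpow_inv hp0.ne',
          ENNReal.coe_mul, ENNReal.coe_rpow_of_nonneg _ (by positivity)]
        ring
    _ ≤ (K ^ (1 / p) * L + 1 : ℝ≥0) * (ψ₂ a r * N) := by
        gcongr
        exact le_self_add
    _ = ψ₂ a r * ((K ^ (1 / p) * L + 1 : ℝ≥0) * N) := by ring

end Morrey

section Euclidean

lemma isDoublingWith_addHaar {E : Type*} [NormedAddCommGroup E] [NormedSpace ℝ E]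
    [FiniteDimensional ℝ E] [MeasurableSpace E] [BorelSpace E] (μ : Measure E)
    [μ.IsAddHaarMeasure] : IsDoublingWith μ (2 ^ Module.finrank ℝ E) := by
  intro x r _
  rw [Measure.addHaar_ball_mul_of_pos μ x two_pos, ← Measure.addHaar_ball_center μ x r,
    ENNReal.ofReal_pow zero_le_two, ENNReal.ofReal_ofNat, ENNReal.coe_pow, ENNReal.coe_ofNat]

variable {n : ℕ} {p : ℝ} {w : EuclideanSpace ℝ (Fin n) → ℝ}

lemma isMuckenhouptWeight_ofReal (hw : IsWeight w) (hAp : MuckAp p w) :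
    IsMuckenhouptWeight volume p fun x ↦ ENNReal.ofReal (w x) where
  measurable := hw.1.ennreal_ofReal
  ae_ne_zero := hw.2.2.2.mono fun x hx ↦ (ENNReal.ofReal_pos.mpr hx).ne'
  ae_ne_top := .of_forall fun x ↦ ENNReal.ofReal_ne_top
  exists_bound := by
    obtain ⟨C, -, hC⟩ := hAp
    refine ⟨C.toNNReal, fun a r hr ↦ le_of_eq_of_le ?_ (hC a r hr)⟩
    have hdual : ⨍⁻ x in ball a r, dualWeight p (fun x ↦ ENNReal.ofReal (w x)) x ∂volume =
        ⨍⁻ x in ball a r, ENNReal.ofReal (w x ^ (-(1 / (p - 1)))) ∂volume :=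
      laverage_congr <| ae_restrict_of_ae <| hw.2.2.2.mono fun x hx ↦ ENNReal.ofReal_rpow_of_pos hx
    rw [hdual]
    simp only [setLAverage_eq, div_eq_mul_inv, mul_comm]

lemma HLMax_eq_maximalFunction (f : EuclideanSpace ℝ (Fin n) → ℝ) :
    HLMax f = maximalFunction volume fun x ↦ ENNReal.ofReal |f x| := by
  ext x
  simp only [HLMax, maximalFunction, setLAverage_eq, div_eq_mul_inv, mul_comm]

lemma morreyNormE_eq_generalizedMorreyNorm (hp : 0 ≤ p) (hw : Measurable w)
    (ψ : EuclideanSpace ℝ (Fin n) → ℝ → ℝ) (g : EuclideanSpace ℝ (Fin n) → ℝ≥0∞) :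
    morreyNormE p w ψ g = generalizedMorreyNorm
      (volume.withDensity fun x ↦ ENNReal.ofReal (w x)) p (fun a r ↦ (ψ a r).toNNReal) g := by
  simp only [morreyNormE, generalizedMorreyNorm]
  refine iSup_congr fun a ↦ iSup_congr fun r ↦ ?_
  have hw' := hw.ennreal_ofReal
  rw [setLAverage_eq, withDensity_apply _ measurableSet_ball,
    setLIntegral_withDensity_eq_setLIntegral_mul_non_measurable _ hw' _ measurableSet_ball
      (.of_forall fun _ ↦ ENNReal.ofReal_lt_top), ENNReal.div_rpow_of_nonneg _ _ (by positivity),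
    ENNReal.div_eq_inv_mul, ← ENNReal.rpow_neg, ← mul_assoc]
  simp only [wSet, wLpE, ENNReal.ofReal, Pi.mul_apply, mul_comm]

lemma morreyNorm_eq_generalizedMorreyNorm (hp : 0 ≤ p) (hw : Measurable w)
    (ψ : EuclideanSpace ℝ (Fin n) → ℝ → ℝ) (f : EuclideanSpace ℝ (Fin n) → ℝ) :
    morreyNorm p w ψ f = generalizedMorreyNorm (volume.withDensity fun x ↦ ENNReal.ofReal (w x)) p
      (fun a r ↦ (ψ a r).toNNReal) fun x ↦ ENNReal.ofReal |f x| :=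
  morreyNormE_eq_generalizedMorreyNorm hp hw ψ _

end Euclidean

/-- Let `1 < p < ∞`, `w ∈ A_p`, and let `ψ₁, ψ₂` be positive functions on
`ℝⁿ × (0,∞)` with `∫_r^∞ ψ₁(a,t) dt/t ≤ C·ψ₂(a,r)` for all `(a,r)`. Then the
Hardy–Littlewood maximal operator is bounded from `M^{p,w}_{ψ₁}` to `M^{p,w}_{ψ₂}`. -/
theorem statement10 {n : ℕ} (p : ℝ) (hp : 1 < p)
    (w : EuclideanSpace ℝ (Fin n) → ℝ) (hw : IsWeight w) (hAp : MuckAp p w)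
    (ψ₁ ψ₂ : EuclideanSpace ℝ (Fin n) → ℝ → ℝ)
    (hψ₁ : ∀ a r, 0 < r → 0 < ψ₁ a r) (hψ₂ : ∀ a r, 0 < r → 0 < ψ₂ a r)
    (C : ℝ) (hC : 0 < C)
    (hcond : ∀ (a : EuclideanSpace ℝ (Fin n)) (r : ℝ), 0 < r →
      (∫⁻ t in Set.Ioi r, ENNReal.ofReal (ψ₁ a t) * ENNReal.ofReal t⁻¹) ≤
        ENNReal.ofReal (C * ψ₂ a r)) :
    ∃ C' : ℝ, 0 < C' ∧ ∀ f : EuclideanSpace ℝ (Fin n) → ℝ,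
      MemLocWLp p w f → morreyNorm p w ψ₁ f < ⊤ →
      morreyNormE p w ψ₂ (HLMax f) ≤ ENNReal.ofReal C' * morreyNorm p w ψ₁ f := by
  have hp0 : 0 ≤ p := by linarith
  obtain ⟨C', hC', hbound⟩ := statement10_general (isDoublingWith_addHaar volume) hp
    (isMuckenhouptWeight_ofReal hw hAp) (ψ₁ := fun a r ↦ (ψ₁ a r).toNNReal)
    (ψ₂ := fun a r ↦ (ψ₂ a r).toNNReal) (C := C.toNNReal)
    fun a r hr ↦ (hcond a r hr).trans_eq (ENNReal.ofReal_mul hC.le)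
  refine ⟨C', hC', fun f hf hN ↦ ?_⟩
  rw [morreyNorm_eq_generalizedMorreyNorm hp0 hw.1] at hN ⊢
  rw [morreyNormE_eq_generalizedMorreyNorm hp0 hw.1, HLMax_eq_maximalFunction,
    ENNReal.ofReal_coe_nnreal]
  exact hbound _ hf.1.abs.ennreal_ofReal hN
end

section
/- Let 0 < α < n, 1 < p < n/α, 1/q = 1/p − α/n, and w ∈ A_{p,q}. Then there exists a constant C > 0, independent of f, a, and r, such that for every a ∈ ℝⁿ, r > 0, and f ∈ L^{p,w^p}_loc: ‖I_α f‖_{L^{q,w^q}(B(a,r))} ≤ C·w^q(B(a,r))^{1/q}·∫_r^∞ w^q(B(a,s))^{-1/q} ‖f‖_{L^{p,w^p}(B(a,s))} ds/s, where w^q(B) = ∫_B w(x)^q dx. -/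
/-!
Put `ν = w ^ q dx`, `μ = w ^ (-p') dx` and `γ = n - α`. Hölder's inequality on one side and the
`A_{p,q}` condition on the other make `ν(B) ^ (1 / q) μ(B) ^ (1 / p')` comparable to `r ^ γ` for
every ball `B` of radius `r`, and make `ν` and `μ` doubling and reverse doubling. Writing
`|f| dx = g dμ` turns `‖f‖_{L^p(w ^ p)}` into `‖g‖_{L^p(μ)}`, and `I_α f` into the integral of `g`
against `dist x y ^ (-γ) dμ(y)`.

Split `g` at `B(a, 2r)`. For the near part, comparability replaces the Riesz kernel by the dyadic
sum of `ν(B(x, 2 ^ k)) ^ (-1 / q) μ(B(y, 2 ^ k)) ^ (-1 / p')` over `2 ^ k > dist x y`. Its `L^p(μ)`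
to `L^q(ν)` bound is proved by duality, without maximal functions. In the `k`-th term of the
bilinear form with `h`, compare `G = g(y) ^ p μ(B(y, 2 ^ k))` and `H = h(x) ^ q' ν(B(x, 2 ^ k))`:
where `G` is the larger, the integrand is dominated by `g(y) ^ p min (G ^ δ) (G ^ (-δ))` times a
function of `x` of bounded mass on balls of radius `2 ^ k`, and symmetrically where `H` is the
larger. A gain `δ > 0` is available because `p < q`, and it makes the sum over `k` converge since
ball measures grow geometrically in `k`.

For the far part, `t ^ (-γ)` is written as an integral over `s > t`, and Hölder's inequality on
`B(a, s)` gives the tail integral.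
-/

open MeasureTheory Metric Set
open scoped ENNReal

open scoped NNReal

section GeometricSums

theorem tsum_indicator_le_geometric {S : Set ℤ} {f : ℤ → ℝ≥0∞} {ρ : ℝ≥0∞}
    (hf : ∀ k ∈ S, ∀ j : ℕ, k + j ∈ S → f k ≤ ρ ^ j) :
    ∑' k, S.indicator f k ≤ (1 - ρ)⁻¹ := by
  classical
  rw [ENNReal.tsum_eq_iSup_sum]
  refine iSup_le fun s => ?_
  rw [Finset.sum_indicator_eq_sum_filter]
  obtain hs | hs := (s.filter (· ∈ S)).eq_empty_or_nonempty
  · simp [hs]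
  set t := s.filter (· ∈ S)
  have hmem : ∀ k ∈ t, k ∈ S := fun k hk => (Finset.mem_filter.mp hk).2
  have hgap : ∀ k ∈ t, k + ((t.max' hs - k).toNat : ℤ) = t.max' hs := fun k hk => by
    have := t.le_max' k hk
    omega
  calc ∑ k ∈ t, f k ≤ ∑ k ∈ t, ρ ^ (t.max' hs - k).toNat :=
        Finset.sum_le_sum fun k hk =>
          hf k (hmem k hk) _ (by rw [hgap k hk]; exact hmem _ (t.max'_mem hs))
    _ = ∑ j ∈ t.image fun k => (t.max' hs - k).toNat, ρ ^ j := by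
        refine (Finset.sum_image fun k hk l hl hkl => ?_).symm
        have := hgap k hk
        have := hgap l hl
        omega
    _ ≤ ∑' j : ℕ, ρ ^ j := ENNReal.sum_le_tsum _
    _ = (1 - ρ)⁻¹ := ENNReal.tsum_geometric ρ

variable {M : ℤ → ℝ≥0∞} {ρ : ℝ≥0∞}

theorem le_pow_mul_of_le_mul_succ (hM : ∀ k, M k ≤ ρ * M (k + 1)) (k : ℤ) (j : ℕ) :
    M k ≤ ρ ^ j * M (k + j) := by
  induction j with
  | zero => simp
  | succ j ih =>
    calc M k ≤ ρ ^ j * M (k + j) := ih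
      _ ≤ ρ ^ j * (ρ * M (k + j + 1)) := by gcongr; exact hM _
      _ = ρ ^ (j + 1) * M (k + (j + 1 : ℕ)) := by
        rw [pow_succ, mul_assoc, Nat.cast_succ, add_assoc]

theorem tsum_min_rpow_le (hM : ∀ k, M k ≤ ρ * M (k + 1)) {δ : ℝ} (hδ : 0 ≤ δ) :
    ∑' k, min (M k ^ δ) (M k ^ (-δ)) ≤ 2 * (1 - ρ ^ δ)⁻¹ := by
  have hpow (j : ℕ) : (ρ ^ δ) ^ j = (ρ ^ j) ^ δ := by
    rw [← ENNReal.rpow_natCast, ← ENNReal.rpow_natCast, ← ENNReal.rpow_mul, mul_comm,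
      ENNReal.rpow_mul]
  have hsmall : ∑' k, {k | M k ≤ 1}.indicator (fun k => M k ^ δ) k ≤ (1 - ρ ^ δ)⁻¹ := by
    refine tsum_indicator_le_geometric fun k _ j hj => ?_
    rw [hpow]
    gcongr
    exact (le_pow_mul_of_le_mul_succ hM k j).trans (mul_le_of_le_one_right' hj)
  have hlarge : ∑' k, {k | 1 ≤ M (-k)}.indicator (fun k => M (-k) ^ (-δ)) k ≤ (1 - ρ ^ δ)⁻¹ := by
    refine tsum_indicator_le_geometric fun k _ j hj => ?_
    have h : 1 ≤ ρ ^ j * M (-k) := by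
      have := le_pow_mul_of_le_mul_succ hM (-(k + j)) j
      rw [show -(k + (j : ℤ)) + j = -k by ring] at this
      exact le_trans hj this
    rw [hpow, ENNReal.rpow_neg, ← ENNReal.inv_rpow]
    gcongr
    refine (ENNReal.inv_le_iff_le_mul ?_ ?_).mpr (mul_comm (ρ ^ j) _ ▸ h)
    · exact fun _ h0 => by simp [h0] at h
    · exact fun _ h0 => by simp [h0] at h
  calc ∑' k, min (M k ^ δ) (M k ^ (-δ))
      ≤ ∑' k, ({k | M k ≤ 1}.indicator (fun k => M k ^ δ) k +
          {k | 1 ≤ M k}.indicator (fun k => M k ^ (-δ)) k) := by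
        gcongr with k
        rcases le_total (M k) 1 with h | h
        · exact (min_le_left _ _).trans (le_add_right (by simp [indicator, h]))
        · exact (min_le_right _ _).trans (le_add_left (by simp [indicator, h]))
    _ ≤ 2 * (1 - ρ ^ δ)⁻¹ := by
        rw [ENNReal.tsum_add, two_mul]
        refine add_le_add hsmall (le_trans (le_of_eq ?_) hlarge)
        rw [← (Equiv.neg ℤ).tsum_eq]
        simp [indicator]

end GeometricSums

section ScalarInequality

theorem rpow_mul_rpow_le_mul_min {G H : ℝ≥0∞} {a b δ : ℝ} (hHG : H ≤ G) (hG : G ≠ ⊤)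
    (hδ : 0 < δ) (ha : a + δ ≤ 1) (hab : 1 + δ ≤ a + b) :
    G ^ a * H ^ b ≤ G * min (G ^ δ) (G ^ (-δ)) * (H ^ b + 1) := by
  have hb : 0 < b := by linarith
  rcases eq_or_ne G 0 with rfl | hG0
  · simp [nonpos_iff_eq_zero.mp hHG, hb]
  have hmul (c : ℝ) : G * G ^ c = G ^ (1 + c) := by
    rw [ENNReal.rpow_add _ _ hG0 hG, ENNReal.rpow_one]
  rcases le_total G 1 with h1 | h1
  · have hmin : min (G ^ δ) (G ^ (-δ)) = G ^ δ :=
      min_eq_left (ENNReal.rpow_le_rpow_of_exponent_ge h1 (by linarith))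
    calc G ^ a * H ^ b ≤ G ^ a * G ^ b := by gcongr
      _ = G ^ (a + b) := (ENNReal.rpow_add _ _ hG0 hG).symm
      _ ≤ G ^ (1 + δ) := ENNReal.rpow_le_rpow_of_exponent_ge h1 hab
      _ ≤ G * min (G ^ δ) (G ^ (-δ)) * (H ^ b + 1) := by
        rw [hmin, hmul]
        exact le_mul_of_one_le_right' le_add_self
  · have hmin : min (G ^ δ) (G ^ (-δ)) = G ^ (-δ) :=
      min_eq_right (ENNReal.rpow_le_rpow_of_exponent_le h1 (by linarith))
    calc G ^ a * H ^ b ≤ G ^ (1 + -δ) * (H ^ b + 1) := by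
          gcongr ?_ * ?_
          · exact ENNReal.rpow_le_rpow_of_exponent_le h1 (by linarith)
          · exact le_self_add
      _ = G * min (G ^ δ) (G ^ (-δ)) * (H ^ b + 1) := by rw [hmin, hmul]

theorem mul_rpow_neg_mul_le_of_mul_le {p p' q q' δ : ℝ} {g h m n : ℝ≥0∞}
    (hp : p.HolderConjugate p') (hq : q.HolderConjugate q')
    (hδ : 0 < δ) (hδp : δ ≤ p'⁻¹) (hδpq : 1 + δ ≤ p⁻¹ + q'⁻¹)
    (hg : g ≠ ⊤) (hm : m ≠ 0) (hm' : m ≠ ⊤) (hn : n ≠ 0) (hn' : n ≠ ⊤)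
    (hle : h ^ q' * n ≤ g ^ p * m) :
    g * m ^ (-p'⁻¹) * (h * n ^ (-q⁻¹)) ≤
      g ^ p * min ((g ^ p * m) ^ δ) ((g ^ p * m) ^ (-δ)) * (h * n ^ (-q⁻¹) + n⁻¹) := by
  have hroot {r r' : ℝ} (hr : r.HolderConjugate r') (u : ℝ≥0∞) {v : ℝ≥0∞} (hv : v ≠ 0)
      (hv' : v ≠ ⊤) : u * v ^ (-r'⁻¹) = (u ^ r * v) ^ r⁻¹ * v⁻¹ := by
    rw [ENNReal.mul_rpow_of_nonneg _ _ hr.inv_nonneg, ENNReal.rpow_rpow_inv hr.ne_zero, mul_assoc,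
      ← ENNReal.rpow_neg_one, ← ENNReal.rpow_add _ _ hv hv']
    congr 2
    linarith [hr.inv_add_inv_eq_one]
  have hG : g ^ p * m ≠ ⊤ := ENNReal.mul_ne_top (ENNReal.rpow_ne_top_of_nonneg hp.nonneg hg) hm'
  rw [hroot hp g hm hm', hroot hq.symm h hn hn']
  calc (g ^ p * m) ^ p⁻¹ * m⁻¹ * ((h ^ q' * n) ^ q'⁻¹ * n⁻¹)
      = (g ^ p * m) ^ p⁻¹ * (h ^ q' * n) ^ q'⁻¹ * (m⁻¹ * n⁻¹) := by ring
    _ ≤ g ^ p * m * min ((g ^ p * m) ^ δ) ((g ^ p * m) ^ (-δ)) * ((h ^ q' * n) ^ q'⁻¹ + 1) *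
          (m⁻¹ * n⁻¹) := by
        gcongr ?_ * _
        exact rpow_mul_rpow_le_mul_min hle hG hδ (by linarith [hp.inv_add_inv_eq_one]) hδpq
    _ = g ^ p * (m * m⁻¹) * min ((g ^ p * m) ^ δ) ((g ^ p * m) ^ (-δ)) *
          ((h ^ q' * n) ^ q'⁻¹ * n⁻¹ + n⁻¹) := by ring
    _ = _ := by rw [ENNReal.mul_inv_cancel hm hm', mul_one]

theorem mul_rpow_neg_mul_le_add {p p' q q' δ : ℝ} {g h m n : ℝ≥0∞}
    (hp : p.HolderConjugate p') (hq : q.HolderConjugate q')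
    (hδ : 0 < δ) (hδp : δ ≤ p'⁻¹) (hδq : δ ≤ q⁻¹) (hδpq : 1 + δ ≤ p⁻¹ + q'⁻¹)
    (hg : g ≠ ⊤) (hh : h ≠ ⊤) (hm : m ≠ 0) (hm' : m ≠ ⊤) (hn : n ≠ 0) (hn' : n ≠ ⊤) :
    g * m ^ (-p'⁻¹) * (h * n ^ (-q⁻¹)) ≤
      g ^ p * min ((g ^ p * m) ^ δ) ((g ^ p * m) ^ (-δ)) * (h * n ^ (-q⁻¹) + n⁻¹) +
      h ^ q' * min ((h ^ q' * n) ^ δ) ((h ^ q' * n) ^ (-δ)) * (g * m ^ (-p'⁻¹) + m⁻¹) := by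
  rcases le_total (h ^ q' * n) (g ^ p * m) with hle | hle
  · exact le_add_right
      (mul_rpow_neg_mul_le_of_mul_le hp hq hδ hδp hδpq hg hm hm' hn hn' hle)
  · rw [mul_comm (g * _)]
    exact le_add_left (mul_rpow_neg_mul_le_of_mul_le hq.symm hp.symm hδ hδq
      (by linarith) hh hn hn' hm hm' hle)

end ScalarInequality

section Doubling

variable {X : Type*} [PseudoMetricSpace X] [MeasurableSpace X]

/-- A measure whose balls are positive and finite and which is both doubling (with constant `D`)
and reverse doubling (with ratio `ρ`, of interest when `ρ < 1`): the measure of a ball grows at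
least and at most geometrically under dilations. -/
structure IsTwoSidedDoubling (ρ : ℝ≥0∞) (D : ℝ≥0) (ν : Measure X) : Prop where
  ball_ne_zero : ∀ x, ∀ r > 0, ν (ball x r) ≠ 0
  ball_ne_top : ∀ x r, ν (ball x r) ≠ ⊤
  ball_two_mul_le : ∀ x, ∀ r > 0, ν (ball x (2 * r)) ≤ D * ν (ball x r)
  ball_le_ball_two_mul : ∀ x, ∀ r > 0, ν (ball x r) ≤ ρ * ν (ball x (2 * r))

namespace IsTwoSidedDoubling

variable {ρ : ℝ≥0∞} {D : ℝ≥0} {ν : Measure X}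

theorem one_le (hν : IsTwoSidedDoubling ρ D ν) (x : X) : (1 : ℝ≥0∞) ≤ D := by
  refine (ENNReal.mul_le_mul_iff_left (hν.ball_ne_zero x 1 one_pos) (hν.ball_ne_top x 1)).mp ?_
  rw [one_mul]
  exact (measure_mono (ball_subset_ball (by norm_num))).trans (hν.ball_two_mul_le x 1 one_pos)

theorem ball_le_of_dist_lt (hν : IsTwoSidedDoubling ρ D ν) {x y : X} {r : ℝ} (h : dist x y < r) :
    ν (ball x r) ≤ D * ν (ball y r) :=
  (measure_mono (ball_subset_ball' (by linarith))).trans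
    (hν.ball_two_mul_le y r (dist_nonneg.trans_lt h))

theorem ball_rpow_neg_le_of_dist_lt (hν : IsTwoSidedDoubling ρ D ν) {x y : X} {r e : ℝ}
    (h : dist x y < r) (he : 0 ≤ e) (he' : e ≤ 1) :
    ν (ball x r) ^ (-e) ≤ D * ν (ball y r) ^ (-e) := by
  have hD := hν.one_le x
  have hD0 : (D : ℝ≥0∞) ≠ 0 := (one_pos.trans_le hD).ne'
  calc ν (ball x r) ^ (-e) ≤ ((D : ℝ≥0∞)⁻¹ * ν (ball y r)) ^ (-e) := by
        rw [ENNReal.rpow_neg, ENNReal.rpow_neg]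
        gcongr
        rw [ENNReal.inv_mul_le_iff hD0 ENNReal.coe_ne_top]
        exact hν.ball_le_of_dist_lt (dist_comm x y ▸ h)
    _ = (D : ℝ≥0∞) ^ e * ν (ball y r) ^ (-e) := by
        rw [ENNReal.mul_rpow_of_ne_top (by simp [hD0]) (hν.ball_ne_top y r), ENNReal.inv_rpow,
          ENNReal.rpow_neg, inv_inv]
    _ ≤ D * ν (ball y r) ^ (-e) := by
        gcongr
        simpa only [ENNReal.rpow_one] using ENNReal.rpow_le_rpow_of_exponent_le hD he'

theorem ball_two_zpow_le (hν : IsTwoSidedDoubling ρ D ν) (x : X) (k : ℤ) :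
    ν (ball x (2 ^ k)) ≤ ρ * ν (ball x (2 ^ (k + 1))) := by
  rw [zpow_add_one₀ two_ne_zero, mul_comm _ (2 : ℝ)]
  exact hν.ball_le_ball_two_mul x _ (by positivity)

end IsTwoSidedDoubling

end Doubling

section BallIntegrals

variable {X : Type*} [PseudoMetricSpace X] [MeasurableSpace X]

theorem setLIntegral_le_rpow_mul_rpow {α : Type*} [MeasurableSpace α] {μ : Measure α} {p q : ℝ}
    (hpq : p.HolderConjugate q) {g : α → ℝ≥0∞} (hg : AEMeasurable g μ) (s : Set α) :
    ∫⁻ x in s, g x ∂μ ≤ (∫⁻ x in s, g x ^ p ∂μ) ^ p⁻¹ * μ s ^ q⁻¹ := by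
  simpa using ENNReal.lintegral_mul_le_Lp_mul_Lq (μ.restrict s) hpq hg.restrict
    (aemeasurable_const (b := (1 : ℝ≥0∞)))

variable [OpensMeasurableSpace X] [SecondCountableTopology X] {μ ν : Measure X}

theorem measurable_uncurry_indicator_ball {F : X → X → ℝ≥0∞}
    (hF : Measurable (Function.uncurry F)) (r : ℝ) :
    Measurable (Function.uncurry fun x => (ball x r).indicator (F x)) := by
  have hball : MeasurableSet {z : X × X | dist z.2 z.1 < r} :=
    measurableSet_lt (measurable_snd.dist measurable_fst) measurable_const
  exact hF.indicator hball

theorem measurable_setLIntegral_ball [SFinite μ] {F : X → X → ℝ≥0∞}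
    (hF : Measurable (Function.uncurry F)) (r : ℝ) :
    Measurable fun x => ∫⁻ y in ball x r, F x y ∂μ := by
  simp_rw [← lintegral_indicator measurableSet_ball]
  exact (measurable_uncurry_indicator_ball hF r).lintegral_prod_right

theorem measurable_measure_ball [SFinite μ] (r : ℝ) : Measurable fun x => μ (ball x r) := by
  simpa using measurable_setLIntegral_ball (μ := μ) (F := fun _ _ => 1) measurable_const r

theorem lintegral_setLIntegral_ball_swap [SFinite μ] [SFinite ν] {F : X → X → ℝ≥0∞}
    (hF : Measurable (Function.uncurry F)) (r : ℝ) :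
    ∫⁻ x, ∫⁻ y in ball x r, F x y ∂μ ∂ν = ∫⁻ y, ∫⁻ x in ball y r, F x y ∂ν ∂μ := by
  simp_rw [← lintegral_indicator measurableSet_ball]
  rw [lintegral_lintegral_swap (measurable_uncurry_indicator_ball hF r).aemeasurable]
  simp only [indicator, mem_ball, dist_comm]

end BallIntegrals

section BilinearForm

variable {X : Type*} [PseudoMetricSpace X] [MeasurableSpace X]

/-- The function `g` normalised at scale `2 ^ k` by the power `t` of the `μ`-measure of balls. -/
noncomputable def ballNormalize (μ : Measure X) (t : ℝ) (g : X → ℝ≥0∞) (k : ℤ) (y : X) : ℝ≥0∞ :=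
  g y * μ (ball y (2 ^ k)) ^ (-t)

/-- For `G = g(y) ^ p μ(B(y, 2 ^ k))`, the factor `min (G ^ δ) (G ^ (-δ))`. It decays geometrically
as `2 ^ k` moves away from the scale at which `G` is close to `1`. -/
noncomputable def scaleDecay (μ : Measure X) (p δ : ℝ) (g : X → ℝ≥0∞) (k : ℤ) (y : X) : ℝ≥0∞ :=
  min ((g y ^ p * μ (ball y (2 ^ k))) ^ δ) ((g y ^ p * μ (ball y (2 ^ k))) ^ (-δ))

variable {μ ν : Measure X} {ρ ρ' : ℝ≥0∞} {D D' : ℝ≥0} {p p' q q' δ t : ℝ} {g h : X → ℝ≥0∞}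

theorem IsTwoSidedDoubling.tsum_scaleDecay_le (hν : IsTwoSidedDoubling ρ D ν) (hδ : 0 ≤ δ) (x : X) :
    ∑' k : ℤ, scaleDecay ν p δ g k x ≤ 2 * (1 - ρ ^ δ)⁻¹ := by
  refine tsum_min_rpow_le (fun k => ?_) hδ
  rw [mul_left_comm]
  gcongr
  exact hν.ball_two_zpow_le x k

variable [OpensMeasurableSpace X]

@[fun_prop]
theorem measurable_ballNormalize [SecondCountableTopology X] [SFinite μ] (hg : Measurable g)
    (k : ℤ) : Measurable (ballNormalize μ t g k) :=
  hg.mul ((measurable_measure_ball _).pow_const _)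

@[fun_prop]
theorem measurable_scaleDecay [SecondCountableTopology X] [SFinite μ] (hg : Measurable g)
    (k : ℤ) : Measurable (scaleDecay μ p δ g k) :=
  have hG := (hg.pow_const p).mul (measurable_measure_ball (μ := μ) ((2 : ℝ) ^ k))
  (hG.pow_const δ).min (hG.pow_const (-δ))

namespace IsTwoSidedDoubling

theorem setLIntegral_ballNormalize_add_inv_le (hν : IsTwoSidedDoubling ρ D ν)
    (hq : q.HolderConjugate q') (hh : Measurable h) (hh1 : ∫⁻ x, h x ^ q' ∂ν ≤ 1) (k : ℤ) (y : X) :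
    ∫⁻ x in ball y (2 ^ k), (ballNormalize ν q⁻¹ h k x + (ν (ball x (2 ^ k)))⁻¹) ∂ν ≤ 2 * D := by
  have hN0 := hν.ball_ne_zero y (2 ^ k) (by positivity)
  have hNt := hν.ball_ne_top y (2 ^ k)
  set N := ν (ball y (2 ^ k))
  have hmass : ∫⁻ x in ball y (2 ^ k), h x ∂ν ≤ N ^ q⁻¹ := by
    refine (setLIntegral_le_rpow_mul_rpow hq.symm hh.aemeasurable _).trans
      (mul_le_of_le_one_left' (ENNReal.rpow_le_one ?_ hq.symm.inv_nonneg))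
    exact (setLIntegral_le_lintegral _ _).trans hh1
  calc ∫⁻ x in ball y (2 ^ k), (ballNormalize ν q⁻¹ h k x + (ν (ball x (2 ^ k)))⁻¹) ∂ν
      ≤ ∫⁻ x in ball y (2 ^ k), (h x * (D * N ^ (-q⁻¹)) + D * N⁻¹) ∂ν := by
        refine setLIntegral_mono' measurableSet_ball fun x hx => ?_
        have hinv := hν.ball_rpow_neg_le_of_dist_lt (mem_ball.mp hx) zero_le_one le_rfl
        rw [ENNReal.rpow_neg_one, ENNReal.rpow_neg_one] at hinv
        refine add_le_add (mul_le_mul_right ?_ _) hinv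
        exact hν.ball_rpow_neg_le_of_dist_lt (mem_ball.mp hx) hq.inv_nonneg
          (inv_le_one_of_one_le₀ hq.lt.le)
    _ = (∫⁻ x in ball y (2 ^ k), h x ∂ν) * (D * N ^ (-q⁻¹)) + D * N⁻¹ * N := by
        rw [lintegral_add_right _ measurable_const, lintegral_mul_const _ hh, setLIntegral_const]
    _ ≤ N ^ q⁻¹ * (D * N ^ (-q⁻¹)) + D * N⁻¹ * N := by gcongr
    _ = D * (N ^ q⁻¹ * N ^ (-q⁻¹)) + D * (N⁻¹ * N) := by ring
    _ = 2 * D := by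
        rw [← ENNReal.rpow_add _ _ hN0 hNt, add_neg_cancel, ENNReal.rpow_zero,
          ENNReal.inv_mul_cancel hN0 hNt, mul_one, two_mul]

variable [SecondCountableTopology X] [SFinite μ]

theorem tsum_lintegral_scaleDecay_mul_le (hμ : IsTwoSidedDoubling ρ D μ)
    (hν : IsTwoSidedDoubling ρ' D' ν) (hq : q.HolderConjugate q') (hδ : 0 ≤ δ)
    (hg : Measurable g) (hg1 : ∫⁻ y, g y ^ p ∂μ ≤ 1)
    (hh : Measurable h) (hh1 : ∫⁻ x, h x ^ q' ∂ν ≤ 1) :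
    ∑' k : ℤ, ∫⁻ y, g y ^ p * scaleDecay μ p δ g k y *
        ∫⁻ x in ball y (2 ^ k), (ballNormalize ν q⁻¹ h k x + (ν (ball x (2 ^ k)))⁻¹) ∂ν ∂μ ≤
      4 * D' * (1 - ρ ^ δ)⁻¹ := by
  calc _ ≤ ∑' k : ℤ, ∫⁻ y, g y ^ p * scaleDecay μ p δ g k y * (2 * D') ∂μ :=
        ENNReal.tsum_le_tsum fun k => lintegral_mono fun y =>
          mul_le_mul_right (hν.setLIntegral_ballNormalize_add_inv_le hq hh hh1 k y) _
    _ = ∫⁻ y, ∑' k : ℤ, g y ^ p * scaleDecay μ p δ g k y * (2 * D') ∂μ :=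
        (lintegral_tsum fun k => by fun_prop).symm
    _ ≤ ∫⁻ y, g y ^ p * (2 * (1 - ρ ^ δ)⁻¹ * (2 * D')) ∂μ := by
        refine lintegral_mono fun y => ?_
        dsimp only
        rw [ENNReal.tsum_mul_right, ENNReal.tsum_mul_left, mul_assoc]
        gcongr
        exact hμ.tsum_scaleDecay_le hδ y
    _ = (∫⁻ y, g y ^ p ∂μ) * (2 * (1 - ρ ^ δ)⁻¹ * (2 * D')) :=
        lintegral_mul_const _ (hg.pow_const p)
    _ ≤ 1 * (2 * (1 - ρ ^ δ)⁻¹ * (2 * D')) := by gcongr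
    _ = 4 * D' * (1 - ρ ^ δ)⁻¹ := by ring

theorem tsum_lintegral_setLIntegral_ballNormalize_le [SFinite ν] (hμ : IsTwoSidedDoubling ρ D μ)
    (hν : IsTwoSidedDoubling ρ' D' ν) (hp : p.HolderConjugate p') (hq : q.HolderConjugate q')
    (hδ : 0 < δ) (hδp : δ ≤ p'⁻¹) (hδq : δ ≤ q⁻¹) (hδpq : 1 + δ ≤ p⁻¹ + q'⁻¹)
    (hg : Measurable g) (hg1 : ∫⁻ y, g y ^ p ∂μ ≤ 1)
    (hh : Measurable h) (hh1 : ∫⁻ x, h x ^ q' ∂ν ≤ 1) :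
    ∑' k : ℤ, ∫⁻ x, ∫⁻ y in ball x (2 ^ k),
        ballNormalize μ p'⁻¹ g k y * ballNormalize ν q⁻¹ h k x ∂μ ∂ν ≤
      4 * D' * (1 - ρ ^ δ)⁻¹ + 4 * D * (1 - ρ' ^ δ)⁻¹ := by
  have hfin {f : X → ℝ≥0∞} {m : Measure X} {e : ℝ} (he : 0 < e) (hf : Measurable f)
      (hf1 : ∫⁻ y, f y ^ e ∂m ≤ 1) : ∀ᵐ y ∂m, f y ≠ ⊤ := by
    filter_upwards [ae_lt_top (hf.pow_const e) (hf1.trans_lt ENNReal.one_lt_top).ne] with y hy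
    exact fun htop => hy.ne (by rw [htop, ENNReal.top_rpow_of_pos he])
  let a (k : ℤ) (y : X) : ℝ≥0∞ := ballNormalize μ p'⁻¹ g k y + (μ (ball y (2 ^ k)))⁻¹
  let b (k : ℤ) (x : X) : ℝ≥0∞ := ballNormalize ν q⁻¹ h k x + (ν (ball x (2 ^ k)))⁻¹
  have ha (k : ℤ) : Measurable (a k) :=
    (measurable_ballNormalize hg k).add (measurable_measure_ball _).inv
  have hb (k : ℤ) : Measurable (b k) :=
    (measurable_ballNormalize hh k).add (measurable_measure_ball _).inv
  have hgb (k : ℤ) : Measurable (Function.uncurry fun x y =>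
      g y ^ p * scaleDecay μ p δ g k y * b k x) := by fun_prop
  calc _ ≤ ∑' k : ℤ, ∫⁻ x, ∫⁻ y in ball x (2 ^ k), (g y ^ p * scaleDecay μ p δ g k y * b k x +
          h x ^ q' * scaleDecay ν q' δ h k x * a k y) ∂μ ∂ν := by
        refine ENNReal.tsum_le_tsum fun k => lintegral_mono_ae ?_
        filter_upwards [hfin hq.symm.pos hh hh1] with x hx
        refine lintegral_mono_ae ?_
        filter_upwards [ae_restrict_of_ae (hfin hp.pos hg hg1)] with y hy
        exact mul_rpow_neg_mul_le_add hp hq hδ hδp hδq hδpq hy hx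
          (hμ.ball_ne_zero _ _ (by positivity)) (hμ.ball_ne_top _ _)
          (hν.ball_ne_zero _ _ (by positivity)) (hν.ball_ne_top _ _)
    _ = ∑' k : ℤ, (∫⁻ y, g y ^ p * scaleDecay μ p δ g k y * ∫⁻ x in ball y (2 ^ k), b k x ∂ν ∂μ +
          ∫⁻ x, h x ^ q' * scaleDecay ν q' δ h k x * ∫⁻ y in ball x (2 ^ k), a k y ∂μ ∂ν) := by
        refine tsum_congr fun k => ?_
        simp_rw [← lintegral_const_mul _ (hb k), ← lintegral_const_mul _ (ha k)]
        rw [← lintegral_setLIntegral_ball_swap (hgb k),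
          ← lintegral_add_left (measurable_setLIntegral_ball (hgb k) _)]
        exact lintegral_congr fun x => lintegral_add_left (by fun_prop) _
    _ ≤ 4 * D' * (1 - ρ ^ δ)⁻¹ + 4 * D * (1 - ρ' ^ δ)⁻¹ := by
        rw [ENNReal.tsum_add]
        exact add_le_add
          (hμ.tsum_lintegral_scaleDecay_mul_le hν hq hδ.le hg hg1 hh hh1)
          (hν.tsum_lintegral_scaleDecay_mul_le hμ hp.symm hδ.le hh hh1 hg hg1)

end IsTwoSidedDoubling

end BilinearForm

section Duality

variable {α : Type*} [MeasurableSpace α] {ν : Measure α} [SigmaFinite ν]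

theorem exists_simpleFunc_le_lt_lintegral_lt_top {F : α → ℝ≥0∞} {L : ℝ≥0∞}
    (hL : L < ∫⁻ x, F x ∂ν) :
    ∃ φ : SimpleFunc α ℝ≥0, (∀ x, (φ x : ℝ≥0∞) ≤ F x) ∧ L < ∫⁻ x, φ x ∂ν ∧ ∫⁻ x, φ x ∂ν < ⊤ := by
  rw [lintegral_eq_nnreal] at hL
  simp only [lt_iSup_iff, ← SimpleFunc.lintegral_eq_lintegral] at hL
  obtain ⟨ψ, hψF, hψ⟩ := hL
  obtain ⟨φ, hφψ, hφtop, hφ⟩ := SimpleFunc.exists_lt_lintegral_simpleFunc_of_lt_lintegral hψ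
  exact ⟨φ, fun x => (ENNReal.coe_le_coe.mpr (hφψ x)).trans (hψF x), hφ, hφtop⟩

theorem lintegral_rpow_rpow_inv_le_of_forall_lintegral_mul_le {q q' : ℝ}
    (hq : q.HolderConjugate q') {F : α → ℝ≥0∞} {C : ℝ≥0∞}
    (hC : ∀ h : α → ℝ≥0∞, Measurable h → ∫⁻ x, h x ^ q' ∂ν ≤ 1 →
      ∫⁻ x, F x * h x ∂ν ≤ C) :
    (∫⁻ x, F x ^ q ∂ν) ^ q⁻¹ ≤ C := by
  rw [ENNReal.rpow_inv_le_iff hq.pos]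
  by_contra! hlt
  obtain ⟨φ, hφF, hφ, hJ⟩ := exists_simpleFunc_le_lt_lintegral_lt_top hlt
  set J := ∫⁻ x, φ x ∂ν
  have hJ0 : J ≠ 0 := (zero_le.trans_lt hφ).ne'
  have hφm : Measurable fun x => (φ x : ℝ≥0∞) := φ.measurable.coe_nnreal_ennreal
  let h (x : α) : ℝ≥0∞ := (φ x : ℝ≥0∞) ^ q'⁻¹ * J ^ (-q'⁻¹)
  have hnorm : ∫⁻ x, h x ^ q' ∂ν ≤ 1 := by
    have hpow (x : α) : h x ^ q' = φ x * J⁻¹ := by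
      rw [ENNReal.mul_rpow_of_nonneg _ _ hq.symm.nonneg, ENNReal.rpow_inv_rpow hq.symm.ne_zero,
        ENNReal.rpow_neg, ENNReal.inv_rpow, ENNReal.rpow_inv_rpow hq.symm.ne_zero]
    simp_rw [hpow]
    rw [lintegral_mul_const _ hφm, ENNReal.mul_inv_cancel hJ0 hJ.ne]
  have hφle (x : α) : (φ x : ℝ≥0∞) * J ^ (-q'⁻¹) ≤ F x * h x := by
    calc (φ x : ℝ≥0∞) * J ^ (-q'⁻¹) = (φ x : ℝ≥0∞) ^ q⁻¹ * h x := by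
          rw [← mul_assoc, ← ENNReal.rpow_add_of_nonneg _ _ hq.inv_nonneg hq.symm.inv_nonneg,
            hq.inv_add_inv_eq_one, ENNReal.rpow_one]
      _ ≤ F x * h x := by
        gcongr
        exact (ENNReal.rpow_inv_le_iff hq.pos).mpr (hφF x)
  have hJC : J ^ q⁻¹ ≤ C :=
    calc J ^ q⁻¹ = ∫⁻ x, (φ x : ℝ≥0∞) * J ^ (-q'⁻¹) ∂ν := by
          rw [lintegral_mul_const _ hφm, ← hq.symm.one_sub_inv, sub_eq_add_neg,
            ENNReal.rpow_add _ _ hJ0 hJ.ne, ENNReal.rpow_one]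
      _ ≤ ∫⁻ x, F x * h x ∂ν := lintegral_mono hφle
      _ ≤ C := hC h (by fun_prop) hnorm
  exact (((ENNReal.rpow_inv_le_iff hq.pos).mp hJC).trans_lt hφ).false

end Duality

section DyadicPotential

variable {X : Type*} [PseudoMetricSpace X] [MeasurableSpace X]

/-- The two-weight potential `∫ g(y) (∑ ν(B(x, 2 ^ k)) ^ (-s) μ(B(y, 2 ^ k)) ^ (-t)) dμ(y)`, where
the sum runs over the integers `k` with `dist x y < 2 ^ k`. It dominates the Riesz potential when
`ν(B) ^ s μ(B) ^ t` is comparable to a power of the radius of `B`. -/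
noncomputable def dyadicPotential (μ ν : Measure X) (s t : ℝ) (g : X → ℝ≥0∞) (x : X) : ℝ≥0∞ :=
  ∑' k : ℤ, ν (ball x (2 ^ k)) ^ (-s) * ∫⁻ y in ball x (2 ^ k), ballNormalize μ t g k y ∂μ

variable {μ ν : Measure X} {s t : ℝ} {g h : X → ℝ≥0∞}

theorem dyadicPotential_eq_zero_of_ae_eq_zero (hg : g =ᵐ[μ] 0) :
    dyadicPotential μ ν s t g = 0 := by
  have hzero (k : ℤ) (x : X) : ∫⁻ y in ball x (2 ^ k), ballNormalize μ t g k y ∂μ = 0 := by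
    have h0 : ballNormalize μ t g k =ᵐ[μ.restrict (ball x (2 ^ k))] fun _ => 0 := by
      filter_upwards [ae_restrict_of_ae hg] with y hy
      simp only [ballNormalize, hy, Pi.zero_apply, zero_mul]
    rw [lintegral_congr_ae h0, lintegral_zero]
  funext x
  simp only [dyadicPotential, hzero, mul_zero, tsum_zero, Pi.zero_apply]

variable [OpensMeasurableSpace X] [SecondCountableTopology X] [SFinite μ]

theorem measurable_setLIntegral_ballNormalize (hg : Measurable g) (k : ℤ) :
    Measurable fun x => ∫⁻ y in ball x (2 ^ k), ballNormalize μ t g k y ∂μ :=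
  measurable_setLIntegral_ball (F := fun _ => ballNormalize μ t g k) (by fun_prop) _

theorem dyadicPotential_const_mul (c : ℝ≥0∞) (hg : Measurable g) (x : X) :
    dyadicPotential μ ν s t (fun y => c * g y) x = c * dyadicPotential μ ν s t g x := by
  have hc (k : ℤ) : ballNormalize μ t (fun y => c * g y) k = fun y => c * ballNormalize μ t g k y :=
    funext fun _ => mul_assoc _ _ _
  simp only [dyadicPotential, hc]
  rw [← ENNReal.tsum_mul_left]
  refine tsum_congr fun k => ?_
  rw [lintegral_const_mul _ (measurable_ballNormalize hg k), mul_left_comm]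

theorem measurable_dyadicPotential [SFinite ν] (hg : Measurable g) :
    Measurable (dyadicPotential μ ν s t g) :=
  .tsum fun k => ((measurable_measure_ball _).pow_const _).mul
    (measurable_setLIntegral_ballNormalize hg k)

theorem lintegral_dyadicPotential_mul [SFinite ν] (hg : Measurable g) (hh : Measurable h) :
    ∫⁻ x, dyadicPotential μ ν s t g x * h x ∂ν =
      ∑' k : ℤ, ∫⁻ x, ∫⁻ y in ball x (2 ^ k),
        ballNormalize μ t g k y * ballNormalize ν s h k x ∂μ ∂ν := by
  have hfac (x : X) : dyadicPotential μ ν s t g x * h x =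
      ∑' k : ℤ, (∫⁻ y in ball x (2 ^ k), ballNormalize μ t g k y ∂μ) * ballNormalize ν s h k x := by
    rw [dyadicPotential, ← ENNReal.tsum_mul_right]
    exact tsum_congr fun k => by rw [ballNormalize]; ring
  simp_rw [hfac, lintegral_mul_const _ (measurable_ballNormalize hg _)]
  exact lintegral_tsum fun k =>
    ((measurable_setLIntegral_ballNormalize hg k).mul (measurable_ballNormalize hh k)).aemeasurable

theorem lintegral_dyadicPotential_rpow_le_of_forall_le_one [SFinite ν] {p q : ℝ} {C : ℝ≥0∞}
    (hp : 0 < p) (hq : 0 < q) (hC : ∀ g : X → ℝ≥0∞, Measurable g → ∫⁻ y, g y ^ p ∂μ ≤ 1 →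
      (∫⁻ x, dyadicPotential μ ν s t g x ^ q ∂ν) ^ q⁻¹ ≤ C)
    (hg : Measurable g) (hgtop : ∫⁻ y, g y ^ p ∂μ ≠ ⊤) :
    (∫⁻ x, dyadicPotential μ ν s t g x ^ q ∂ν) ^ q⁻¹ ≤ C * (∫⁻ y, g y ^ p ∂μ) ^ p⁻¹ := by
  rcases eq_or_ne (∫⁻ y, g y ^ p ∂μ) 0 with h0 | h0
  · have hg0 : g =ᵐ[μ] 0 := by
      filter_upwards [(lintegral_eq_zero_iff (hg.pow_const p)).mp h0] with y hy
      exact (ENNReal.rpow_eq_zero_iff_of_pos hp).mp hy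
    simp [dyadicPotential_eq_zero_of_ae_eq_zero hg0, hq]
  set N := (∫⁻ y, g y ^ p ∂μ) ^ p⁻¹ with hN
  have hN0 : N ≠ 0 := by simp [hN, h0, hp.le]
  have hNtop : N ≠ ⊤ := ENNReal.rpow_ne_top_of_nonneg (inv_nonneg.mpr hp.le) hgtop
  have hunit : ∫⁻ y, (N⁻¹ * g y) ^ p ∂μ ≤ 1 := by
    simp_rw [ENNReal.mul_rpow_of_nonneg _ _ hp.le]
    rw [lintegral_const_mul _ (hg.pow_const p), ENNReal.inv_rpow, hN, ENNReal.rpow_inv_rpow hp.ne',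
      ENNReal.inv_mul_cancel h0 hgtop]
  have hscale (x : X) : dyadicPotential μ ν s t g x =
      N * dyadicPotential μ ν s t (fun y => N⁻¹ * g y) x := by
    rw [dyadicPotential_const_mul _ hg, ENNReal.mul_inv_cancel_left hN0 hNtop]
  calc (∫⁻ x, dyadicPotential μ ν s t g x ^ q ∂ν) ^ q⁻¹
      = N * (∫⁻ x, dyadicPotential μ ν s t (fun y => N⁻¹ * g y) x ^ q ∂ν) ^ q⁻¹ := by
        simp_rw [hscale, ENNReal.mul_rpow_of_nonneg _ _ hq.le]
        rw [lintegral_const_mul _ ((measurable_dyadicPotential (hg.const_mul _)).pow_const q),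
          ENNReal.mul_rpow_of_nonneg _ _ (inv_nonneg.mpr hq.le), ENNReal.rpow_rpow_inv hq.ne']
    _ ≤ C * N := by
        rw [mul_comm]
        gcongr
        exact hC _ (hg.const_mul _) hunit

theorem IsTwoSidedDoubling.exists_lintegral_dyadicPotential_rpow_le [SigmaFinite ν]
    {ρ ρ' : ℝ≥0∞} {D D' : ℝ≥0} (hμ : IsTwoSidedDoubling ρ D μ) (hν : IsTwoSidedDoubling ρ' D' ν)
    (hρ : ρ < 1) (hρ' : ρ' < 1) {p p' q q' : ℝ} (hp : p.HolderConjugate p')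
    (hq : q.HolderConjugate q') (hpq : p < q) :
    ∃ C : ℝ≥0, ∀ g : X → ℝ≥0∞, Measurable g → ∫⁻ y, g y ^ p ∂μ ≠ ⊤ →
      (∫⁻ x, dyadicPotential μ ν q⁻¹ p'⁻¹ g x ^ q ∂ν) ^ q⁻¹ ≤ C * (∫⁻ y, g y ^ p ∂μ) ^ p⁻¹ := by
  have hgap : 0 < p⁻¹ - q⁻¹ := sub_pos.mpr (inv_strictAnti₀ hp.pos hpq)
  obtain ⟨δ, hδ, hδmin⟩ := exists_between (lt_min (lt_min hp.symm.inv_pos hq.inv_pos) hgap)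
  simp only [lt_min_iff] at hδmin
  obtain ⟨⟨hδp, hδq⟩, hδpq⟩ := hδmin
  have hδpq' : 1 + δ ≤ p⁻¹ + q'⁻¹ := by linarith [hq.inv_add_inv_eq_one]
  set C := 4 * D' * (1 - ρ ^ δ)⁻¹ + 4 * D * (1 - ρ' ^ δ)⁻¹
  have hCtop : C ≠ ⊤ := by
    have hinv {r : ℝ≥0∞} (hr : r < 1) : (1 - r ^ δ)⁻¹ ≠ ⊤ :=
      ENNReal.inv_ne_top.mpr (tsub_pos_of_lt (ENNReal.rpow_lt_one hr hδ)).ne'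
    have := hinv hρ
    have := hinv hρ'
    finiteness
  refine ⟨C.toNNReal, fun g hg hgtop => ?_⟩
  rw [ENNReal.coe_toNNReal hCtop]
  refine lintegral_dyadicPotential_rpow_le_of_forall_le_one hp.pos hq.pos
    (fun g hg hg1 => ?_) hg hgtop
  refine lintegral_rpow_rpow_inv_le_of_forall_lintegral_mul_le hq fun h hh hh1 => ?_
  rw [lintegral_dyadicPotential_mul hg hh]
  exact hμ.tsum_lintegral_setLIntegral_ballNormalize_le hν hp hq hδ hδp.le hδq.le hδpq'
    hg hg1 hh hh1

end DyadicPotential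

section MuckenhouptPair

/-- The `A_{p,q}` condition as a relation between the measures `ν = w ^ q dx` and
`μ = w ^ (-p') dx`, with `s = 1 / q` and `t = 1 / p'`: the quantity `ν(B) ^ s μ(B) ^ t` is
comparable to `|B| ^ (s + t)` on balls. The lower bound is Hölder's inequality, which holds on every
measurable set; the upper bound is the Muckenhoupt condition. -/
structure IsMuckenhouptPair {X : Type*} [PseudoMetricSpace X] [MeasurableSpace X]
    (lam ν μ : Measure X) (s t : ℝ) (K : ℝ≥0) : Prop where
  rpow_le : ∀ S, MeasurableSet S → lam S ^ (s + t) ≤ ν S ^ s * μ S ^ t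
  ball_le : ∀ x, ∀ r > 0, ν (ball x r) ^ s * μ (ball x r) ^ t ≤ K * lam (ball x r) ^ (s + t)

namespace IsMuckenhouptPair

theorem symm {X : Type*} [PseudoMetricSpace X] [MeasurableSpace X] {lam ν μ : Measure X} {s t : ℝ}
    {K : ℝ≥0} (h : IsMuckenhouptPair lam ν μ s t K) : IsMuckenhouptPair lam μ ν t s K where
  rpow_le S hS := by simpa only [mul_comm, add_comm] using h.rpow_le S hS
  ball_le x r hr := by simpa only [mul_comm, add_comm] using h.ball_le x r hr

variable {E : Type*} [NormedAddCommGroup E] [MeasurableSpace E] [BorelSpace E]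
  {lam ν μ : Measure E} [lam.IsOpenPosMeasure] {s t : ℝ} {K : ℝ≥0} {x : E} {r : ℝ}

theorem ball_ne_zero (h : IsMuckenhouptPair lam ν μ s t K) (hs : 0 < s) (ht : 0 < t) (x : E)
    (hr : 0 < r) : ν (ball x r) ≠ 0 := fun h0 => by
  have hle := h.rpow_le (ball x r) measurableSet_ball
  rw [h0, ENNReal.zero_rpow_of_pos hs, zero_mul, nonpos_iff_eq_zero,
    ENNReal.rpow_eq_zero_iff_of_pos (add_pos hs ht)] at hle
  exact (measure_ball_pos lam x hr).ne' hle

variable [ProperSpace E] [IsFiniteMeasureOnCompacts lam]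

theorem ball_ne_top (h : IsMuckenhouptPair lam ν μ s t K) (hs : 0 < s) (ht : 0 < t) (x : E)
    (r : ℝ) : ν (ball x r) ≠ ⊤ := by
  rcases le_or_gt r 0 with hr | hr
  · simp [ball_eq_empty.mpr hr]
  intro htop
  have hle := h.ball_le x r hr
  have hμ0 := h.symm.ball_ne_zero ht hs x hr
  rw [htop, ENNReal.top_rpow_of_pos hs,
    ENNReal.top_mul fun h0 => hμ0 ((ENNReal.rpow_eq_zero_iff_of_pos ht).mp h0), top_le_iff] at hle
  have hlam : lam (ball x r) ≠ ⊤ := measure_ball_ne_top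
  exact absurd hle (by finiteness)

theorem measure_ball_le_of_subset (h : IsMuckenhouptPair lam ν μ s t K) (hs : 0 < s) (ht : 0 < t)
    {c : ℝ≥0∞} {S : Set E} (hr : 0 < r) (hS : MeasurableSet S) (hSB : S ⊆ ball x r)
    (hc : lam (ball x r) ≤ c * lam S) : ν (ball x r) ≤ (K * c ^ (s + t)) ^ s⁻¹ * ν S := by
  have hst : 0 < s + t := add_pos hs ht
  have hμ0 := h.symm.ball_ne_zero ht hs x hr
  have hμtop := h.symm.ball_ne_top ht hs x r
  have hmul : ν (ball x r) ^ s * μ (ball x r) ^ t ≤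
      K * c ^ (s + t) * ν S ^ s * μ (ball x r) ^ t := by
    calc ν (ball x r) ^ s * μ (ball x r) ^ t ≤ K * lam (ball x r) ^ (s + t) := h.ball_le x r hr
      _ ≤ K * (c * lam S) ^ (s + t) := by gcongr
      _ ≤ K * (c ^ (s + t) * (ν S ^ s * μ (ball x r) ^ t)) := by
          rw [ENNReal.mul_rpow_of_nonneg _ _ hst.le]
          gcongr
          exact (h.rpow_le S hS).trans (by gcongr)
      _ = K * c ^ (s + t) * ν S ^ s * μ (ball x r) ^ t := by ring
  have hpow : ν (ball x r) ^ s ≤ K * c ^ (s + t) * ν S ^ s :=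
    (ENNReal.mul_le_mul_iff_left (by simp [hμ0, hμtop])
      (ENNReal.rpow_ne_top_of_nonneg ht.le hμtop)).mp hmul
  have hinv : 0 ≤ s⁻¹ := inv_nonneg.mpr hs.le
  simpa only [ENNReal.rpow_rpow_inv hs.ne', ENNReal.mul_rpow_of_nonneg _ _ hinv] using
    ENNReal.rpow_le_rpow hpow hinv

end IsMuckenhouptPair

variable {E : Type*} [NormedAddCommGroup E] [NormedSpace ℝ E] [FiniteDimensional ℝ E]
  [MeasurableSpace E] [BorelSpace E] {lam ν μ : Measure E} [lam.IsAddHaarMeasure]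

theorem addHaar_ball_two_mul (lam : Measure E) [lam.IsAddHaarMeasure] (x : E) (r : ℝ) :
    lam (ball x (2 * r)) = 2 ^ Module.finrank ℝ E * lam (ball x r) := by
  rw [Measure.addHaar_ball_mul_of_pos lam x two_pos, Measure.addHaar_ball_center lam x r,
    ENNReal.ofReal_pow zero_le_two, ENNReal.ofReal_ofNat]

theorem IsMuckenhouptPair.exists_ball_le_ofReal_rpow {s t γ : ℝ} {K : ℝ≥0}
    (h : IsMuckenhouptPair lam ν μ s t K) (hst : 0 ≤ s + t)
    (hγ : Module.finrank ℝ E * (s + t) = γ) :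
    ∃ K' : ℝ≥0, ∀ x, ∀ r > 0,
      ν (ball x r) ^ s * μ (ball x r) ^ t ≤ K' * ENNReal.ofReal (r ^ γ) := by
  have hlam : lam (ball 0 1) ≠ ⊤ := measure_ball_ne_top
  have hCtop : K * lam (ball 0 1) ^ (s + t) ≠ ⊤ := by finiteness
  refine ⟨(K * lam (ball 0 1) ^ (s + t)).toNNReal, fun x r hr => ?_⟩
  calc ν (ball x r) ^ s * μ (ball x r) ^ t ≤ K * lam (ball x r) ^ (s + t) := h.ball_le x r hr
    _ = K * lam (ball 0 1) ^ (s + t) * ENNReal.ofReal (r ^ γ) := by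
        rw [Measure.addHaar_ball_of_pos lam x hr, ENNReal.mul_rpow_of_nonneg _ _ hst,
          ENNReal.ofReal_rpow_of_pos (by positivity), ← Real.rpow_natCast, ← Real.rpow_mul hr.le,
          hγ]
        ring
    _ = _ := by rw [ENNReal.coe_toNNReal hCtop]

variable [Nontrivial E]

theorem addHaar_ball_two_mul_le_diff (lam : Measure E) [lam.IsAddHaarMeasure] (x : E) {r : ℝ}
    (hr : 0 ≤ r) :
    lam (ball x (2 * r)) ≤ 2 ^ Module.finrank ℝ E * lam (ball x (2 * r) \ ball x r) := by
  have htop : lam (ball x r) ≠ ⊤ := measure_ball_ne_top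
  have hdouble : 2 * lam (ball x r) ≤ lam (ball x (2 * r)) := by
    rw [addHaar_ball_two_mul]
    gcongr
    exact le_self_pow one_le_two Module.finrank_pos.ne'
  rw [measure_sdiff (ball_subset_ball (by linarith)) measurableSet_ball.nullMeasurableSet htop,
    addHaar_ball_two_mul]
  gcongr
  rw [← addHaar_ball_two_mul]
  exact ENNReal.le_sub_of_add_le_left htop (by rwa [← two_mul])

theorem IsMuckenhouptPair.exists_isTwoSidedDoubling {s t : ℝ} {K : ℝ≥0}
    (h : IsMuckenhouptPair lam ν μ s t K) (hs : 0 < s) (ht : 0 < t) :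
    ∃ ρ < 1, ∃ D, IsTwoSidedDoubling ρ D ν := by
  have : 0 ≤ s + t := (add_pos hs ht).le
  set c : ℝ≥0∞ := 2 ^ Module.finrank ℝ E
  set D : ℝ≥0∞ := (K * c ^ (s + t)) ^ s⁻¹
  have hDtop : D ≠ ⊤ := by
    have : 0 ≤ s⁻¹ := inv_nonneg.mpr hs.le
    finiteness
  have hdiff (x : E) {r : ℝ} (hr : 0 < r) : D⁻¹ * ν (ball x (2 * r)) ≤
      ν (ball x (2 * r) \ ball x r) := by
    rw [← ENNReal.div_eq_inv_mul]
    exact ENNReal.div_le_of_le_mul' (h.measure_ball_le_of_subset hs ht (by positivity)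
      (measurableSet_ball.diff measurableSet_ball) sdiff_subset
      (addHaar_ball_two_mul_le_diff lam x hr.le))
  refine ⟨1 - D⁻¹, ENNReal.sub_lt_self (by simp) (by simp) (by simpa using hDtop), D.toNNReal,
    fun x r hr => h.ball_ne_zero hs ht x hr, h.ball_ne_top hs ht, fun x r hr => ?_,
    fun x r hr => ?_⟩
  · rw [ENNReal.coe_toNNReal hDtop]
    exact h.measure_ball_le_of_subset hs ht (by positivity) measurableSet_ball
      (ball_subset_ball (by linarith)) (addHaar_ball_two_mul lam x r).le
  · have hsub : ball x r ⊆ ball x (2 * r) := ball_subset_ball (by linarith)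
    have htop := h.ball_ne_top hs ht x (2 * r)
    have hsum : ν (ball x r) + ν (ball x (2 * r) \ ball x r) = ν (ball x (2 * r)) := by
      rw [← measure_union disjoint_sdiff_right (measurableSet_ball.diff measurableSet_ball),
        union_sdiff_cancel hsub]
    rw [ENNReal.sub_mul fun _ _ => htop, one_mul]
    refine ENNReal.le_sub_of_add_le_right (ne_top_of_le_ne_top htop ?_) ?_
    · exact (hdiff x hr).trans (measure_mono sdiff_subset)
    · calc _ ≤ ν (ball x r) + ν (ball x (2 * r) \ ball x r) := by gcongr; exact hdiff x hr
        _ = _ := hsum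

end MuckenhouptPair

section RieszKernel

variable {X : Type*} [PseudoMetricSpace X] [MeasurableSpace X] {μ ν : Measure X}
  {ρ ρ' : ℝ≥0∞} {D D' K : ℝ≥0} {s t γ : ℝ}

theorem IsTwoSidedDoubling.ae_dist_pos (hμ : IsTwoSidedDoubling ρ D μ) (hρ : ρ < 1) (x : X) :
    ∀ᵐ y ∂μ, 0 < dist x y := by
  have hnull : {y | ¬ 0 < dist x y} ⊆ ⋂ k : ℕ, ball x (2 ^ (-k : ℤ)) := fun y hy =>
    mem_iInter.mpr fun k => mem_ball'.mpr ((not_lt.mp hy).trans_lt (by positivity))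
  have hgeom (k : ℕ) : μ (ball x (2 ^ (-k : ℤ))) ≤ ρ ^ k * μ (ball x 1) := by
    induction k with
    | zero => simp
    | succ k ih =>
      calc μ (ball x (2 ^ (-(k + 1 : ℕ) : ℤ))) ≤ ρ * μ (ball x (2 ^ (-k : ℤ))) := by
            simpa using hμ.ball_two_zpow_le x (-(k + 1 : ℕ))
        _ ≤ ρ * (ρ ^ k * μ (ball x 1)) := by gcongr
        _ = ρ ^ (k + 1) * μ (ball x 1) := by ring
  have hlim : Filter.Tendsto (fun k : ℕ => ρ ^ k * μ (ball x 1)) Filter.atTop (nhds 0) := by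
    simpa using ENNReal.Tendsto.mul_const (ENNReal.tendsto_pow_atTop_nhds_zero_of_lt_one hρ)
      (.inr (hμ.ball_ne_top x 1))
  exact le_antisymm (ge_of_tendsto' hlim fun k =>
    (measure_mono (hnull.trans (iInter_subset _ k))).trans (hgeom k)) zero_le

theorem inv_ofReal_rpow_le_mul_rpow_neg (hμ : IsTwoSidedDoubling ρ D μ)
    (hν : IsTwoSidedDoubling ρ' D' ν)
    (hK : ∀ x, ∀ r > 0, ν (ball x r) ^ s * μ (ball x r) ^ t ≤ K * ENNReal.ofReal (r ^ γ))
    (hs : 0 ≤ s) (ht : 0 ≤ t) (hγ : 0 ≤ γ) {x y : X} {d R : ℝ} (hd : 0 < d) (hR : R ≤ 2 * d)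
    (hxy : dist x y < R) :
    (ENNReal.ofReal (d ^ γ))⁻¹ ≤
      K * ENNReal.ofReal (4 ^ γ) * (ν (ball x R) ^ (-s) * μ (ball y R) ^ (-t)) := by
  have hR0 : 0 < R := dist_nonneg.trans_lt hxy
  have hν0 := hν.ball_ne_zero x R hR0
  have hνtop := hν.ball_ne_top x R
  have hμ0 := hμ.ball_ne_zero y R hR0
  have hμtop := hμ.ball_ne_top y R
  have hprod0 : ν (ball x R) ^ s * μ (ball y R) ^ t ≠ 0 := by simp [hν0, hνtop, hμ0, hμtop]
  have hprod_top : ν (ball x R) ^ s * μ (ball y R) ^ t ≠ ⊤ := by finiteness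
  have hprod : ν (ball x R) ^ s * μ (ball y R) ^ t ≤
      K * ENNReal.ofReal (4 ^ γ) * ENNReal.ofReal (d ^ γ) := by
    calc ν (ball x R) ^ s * μ (ball y R) ^ t
        ≤ ν (ball x (2 * R)) ^ s * μ (ball x (2 * R)) ^ t := by
          gcongr
          · linarith
          · exact ball_subset_ball' (by linarith [dist_comm x y])
      _ ≤ K * ENNReal.ofReal ((2 * R) ^ γ) := hK x _ (by positivity)
      _ ≤ K * ENNReal.ofReal ((4 * d) ^ γ) := by
          have : 2 * R ≤ 4 * d := by linarith
          gcongr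
      _ = K * ENNReal.ofReal (4 ^ γ) * ENNReal.ofReal (d ^ γ) := by
          rw [Real.mul_rpow (by norm_num) hd.le, ENNReal.ofReal_mul (by positivity), mul_assoc]
  rw [ENNReal.rpow_neg, ENNReal.rpow_neg,
    ← ENNReal.mul_inv (.inr (by finiteness)) (.inl (by finiteness)), ← div_eq_mul_inv,
    ENNReal.le_div_iff_mul_le (.inl hprod0) (.inl hprod_top), mul_comm, ← div_eq_mul_inv]
  exact ENNReal.div_le_of_le_mul hprod

variable [OpensMeasurableSpace X] [SecondCountableTopology X] [SFinite μ]

theorem lintegral_div_dist_rpow_le_dyadicPotential (hμ : IsTwoSidedDoubling ρ D μ)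
    (hν : IsTwoSidedDoubling ρ' D' ν) (hρ : ρ < 1)
    (hK : ∀ x, ∀ r > 0, ν (ball x r) ^ s * μ (ball x r) ^ t ≤ K * ENNReal.ofReal (r ^ γ))
    (hs : 0 ≤ s) (ht : 0 ≤ t) (hγ : 0 ≤ γ) {g : X → ℝ≥0∞} (hg : Measurable g) (x : X) :
    ∫⁻ y, g y / ENNReal.ofReal (dist x y ^ γ) ∂μ ≤
      K * ENNReal.ofReal (4 ^ γ) * dyadicPotential μ ν s t g x := by
  set C : ℝ≥0∞ := K * ENNReal.ofReal (4 ^ γ)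
  set T : ℤ → X → ℝ≥0∞ := fun k =>
    (ball x (2 ^ k)).indicator fun y => ν (ball x (2 ^ k)) ^ (-s) * ballNormalize μ t g k y
  have hT (k : ℤ) : Measurable (T k) :=
    ((measurable_ballNormalize hg k).const_mul _).indicator measurableSet_ball
  have hpt : ∀ᵐ y ∂μ, g y / ENNReal.ofReal (dist x y ^ γ) ≤ C * ∑' k, T k y := by
    filter_upwards [hμ.ae_dist_pos hρ x] with y hy
    obtain ⟨k, hle, hlt⟩ := exists_mem_Ico_zpow hy one_lt_two
    have hkernel := inv_ofReal_rpow_le_mul_rpow_neg hμ hν hK hs ht hγ hy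
      (R := 2 ^ (k + 1)) (by rw [zpow_add_one₀ two_ne_zero]; linarith) hlt
    calc g y / ENNReal.ofReal (dist x y ^ γ)
        ≤ g y * (C * (ν (ball x (2 ^ (k + 1))) ^ (-s) * μ (ball y (2 ^ (k + 1))) ^ (-t))) := by
          rw [div_eq_mul_inv]
          gcongr
      _ = C * T (k + 1) y := by
          simp only [T, indicator_of_mem (mem_ball'.mpr hlt), ballNormalize]
          ring
      _ ≤ C * ∑' k, T k y := by
          gcongr
          exact ENNReal.le_tsum (k + 1)
  calc ∫⁻ y, g y / ENNReal.ofReal (dist x y ^ γ) ∂μ ≤ ∫⁻ y, C * ∑' k, T k y ∂μ :=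
        lintegral_mono_ae hpt
    _ = C * ∑' k, ∫⁻ y, T k y ∂μ := by
        rw [lintegral_const_mul _ (.tsum hT), lintegral_tsum fun k => (hT k).aemeasurable]
    _ = C * dyadicPotential μ ν s t g x := by
        simp only [T, dyadicPotential, lintegral_indicator measurableSet_ball,
          lintegral_const_mul _ (measurable_ballNormalize hg _)]

end RieszKernel

section TailNorm

variable {X : Type*} [PseudoMetricSpace X] [MeasurableSpace X] {μ ν : Measure X}
  {p p' q γ r : ℝ} {K D : ℝ≥0} {ρ : ℝ≥0∞} {g : X → ℝ≥0∞}

/-- The right-hand side `∫_r^∞ ν(B(a, s)) ^ (-1 / q) ‖g‖_{L^p(B(a, s), μ)} ds / s` of the local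
estimate for fractional integrals. -/
noncomputable def tailNorm (μ ν : Measure X) (p q : ℝ) (g : X → ℝ≥0∞) (a : X) (r : ℝ) : ℝ≥0∞ :=
  ∫⁻ s in Ioi r,
    ν (ball a s) ^ (-q⁻¹) * (∫⁻ y in ball a s, g y ^ p ∂μ) ^ p⁻¹ * ENNReal.ofReal s⁻¹

theorem tailNorm_anti (a : X) : Antitone (tailNorm μ ν p q g a) := fun _ _ h =>
  lintegral_mono_set (Ioi_subset_Ioi h)

theorem rpow_neg_mul_rpow_le_two_mul_tailNorm (hp : 0 ≤ p) (hq : 0 ≤ q) (hr : 0 < r) (a : X) :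
    ν (ball a (2 * r)) ^ (-q⁻¹) * (∫⁻ y in ball a r, g y ^ p ∂μ) ^ p⁻¹ ≤
      2 * tailNorm μ ν p q g a r := by
  set c := ν (ball a (2 * r)) ^ (-q⁻¹) * (∫⁻ y in ball a r, g y ^ p ∂μ) ^ p⁻¹
  have hlen : 2 * (ENNReal.ofReal (2 * r)⁻¹ * ENNReal.ofReal r) = 1 := by
    rw [← ENNReal.ofReal_mul (by positivity), ← ENNReal.ofReal_ofNat 2,
      ← ENNReal.ofReal_mul (by positivity), ← mul_assoc, mul_inv, mul_inv_cancel_left₀ two_ne_zero,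
      inv_mul_cancel₀ hr.ne', ENNReal.ofReal_one]
  calc c = 2 * (c * ENNReal.ofReal (2 * r)⁻¹ * ENNReal.ofReal r) := by
        rw [mul_assoc c, mul_left_comm, hlen, mul_one]
    _ = 2 * ∫⁻ _ in Ioc r (2 * r), c * ENNReal.ofReal (2 * r)⁻¹ := by
        rw [setLIntegral_const, Real.volume_Ioc, two_mul r, add_sub_cancel_right]
    _ ≤ 2 * ∫⁻ s in Ioc r (2 * r), ν (ball a s) ^ (-q⁻¹) *
          (∫⁻ y in ball a s, g y ^ p ∂μ) ^ p⁻¹ * ENNReal.ofReal s⁻¹ := by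
        refine mul_le_mul_right (setLIntegral_mono' measurableSet_Ioc fun s hs => ?_) 2
        have hs0 : 0 < s := hr.trans hs.1
        simp only [c, ENNReal.rpow_neg]
        gcongr
        · exact hs.2
        · exact hs.1.le
        · exact hs.2
    _ ≤ 2 * tailNorm μ ν p q g a r :=
        mul_le_mul_right (lintegral_mono_set Ioc_subset_Ioi_self) 2

theorem IsTwoSidedDoubling.rpow_setLIntegral_ball_le_mul_tailNorm (hν : IsTwoSidedDoubling ρ D ν)
    (hp : 0 ≤ p) (hq : 0 ≤ q) (hr : 0 < r) (a : X) :
    (∫⁻ y in ball a (2 * r), g y ^ p ∂μ) ^ p⁻¹ ≤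
      2 * (D ^ 2 : ℝ≥0∞) ^ q⁻¹ * (ν (ball a r) ^ q⁻¹ * tailNorm μ ν p q g a r) := by
  set A := ν (ball a (2 * (2 * r)))
  set N := (∫⁻ y in ball a (2 * r), g y ^ p ∂μ) ^ p⁻¹
  have hA0 : A ≠ 0 := hν.ball_ne_zero a _ (by positivity)
  have hAtop : A ≠ ⊤ := hν.ball_ne_top a _
  have hA : A ≤ D ^ 2 * ν (ball a r) := by
    calc A ≤ D * ν (ball a (2 * r)) := hν.ball_two_mul_le a _ (by positivity)
      _ ≤ D * (D * ν (ball a r)) := by gcongr; exact hν.ball_two_mul_le a r hr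
      _ = D ^ 2 * ν (ball a r) := by ring
  calc N = A ^ q⁻¹ * (A ^ (-q⁻¹) * N) := by
        rw [← mul_assoc, ← ENNReal.rpow_add _ _ hA0 hAtop, add_neg_cancel, ENNReal.rpow_zero,
          one_mul]
    _ ≤ (D ^ 2 * ν (ball a r)) ^ q⁻¹ * (2 * tailNorm μ ν p q g a r) := by
        have h2r : r ≤ 2 * r := by linarith
        gcongr ?_ ^ _ * ?_
        exact (rpow_neg_mul_rpow_le_two_mul_tailNorm hp hq (by positivity) a).trans
          (mul_le_mul_right (tailNorm_anti a h2r) 2)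
    _ = _ := by
        rw [ENNReal.mul_rpow_of_nonneg _ _ (inv_nonneg.mpr hq)]
        ring

theorem inv_ofReal_rpow_eq_lintegral_Ioi {t : ℝ} (ht : 0 < t) (hγ : 0 < γ) :
    (ENNReal.ofReal (t ^ γ))⁻¹ =
      ENNReal.ofReal γ * ∫⁻ s in Ioi t, ENNReal.ofReal (s ^ (-γ - 1)) := by
  have hexp : -γ - 1 < -1 := by linarith
  have hnonneg : 0 ≤ᵐ[volume.restrict (Ioi t)] fun s : ℝ => s ^ (-γ - 1) :=
    ae_restrict_of_forall_mem measurableSet_Ioi fun s hs => Real.rpow_nonneg (ht.trans hs).le _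
  rw [← ofReal_integral_eq_lintegral_ofReal (integrableOn_Ioi_rpow_of_lt hexp ht) hnonneg,
    integral_Ioi_rpow_of_lt hexp ht, sub_add_cancel, neg_div_neg_eq, ← ENNReal.ofReal_mul hγ.le,
    mul_div_cancel₀ _ hγ.ne', Real.rpow_neg ht.le,
    ENNReal.ofReal_inv_of_pos (Real.rpow_pos_of_pos ht γ)]

theorem setLIntegral_ball_mul_ofReal_rpow_le (hp : p.HolderConjugate p')
    (hg : Measurable g) {a : X} {s : ℝ} (hs : 0 < s) (hν0 : ν (ball a s) ≠ 0)
    (hνtop : ν (ball a s) ≠ ⊤)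
    (hK : ν (ball a s) ^ q⁻¹ * μ (ball a s) ^ p'⁻¹ ≤ K * ENNReal.ofReal (s ^ γ)) :
    (∫⁻ y in ball a s, g y ∂μ) * ENNReal.ofReal (s ^ (-γ - 1)) ≤
      K * (ν (ball a s) ^ (-q⁻¹) * (∫⁻ y in ball a s, g y ^ p ∂μ) ^ p⁻¹ *
        ENNReal.ofReal s⁻¹) := by
  set N := (∫⁻ y in ball a s, g y ^ p ∂μ) ^ p⁻¹
  have hμν : μ (ball a s) ^ p'⁻¹ ≤ ν (ball a s) ^ (-q⁻¹) * (K * ENNReal.ofReal (s ^ γ)) := by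
    calc μ (ball a s) ^ p'⁻¹
        = ν (ball a s) ^ (-q⁻¹) * (ν (ball a s) ^ q⁻¹ * μ (ball a s) ^ p'⁻¹) := by
          rw [← mul_assoc, ← ENNReal.rpow_add _ _ hν0 hνtop, neg_add_cancel, ENNReal.rpow_zero,
            one_mul]
      _ ≤ _ := by gcongr
  have hpow : ENNReal.ofReal (s ^ γ) * ENNReal.ofReal (s ^ (-γ - 1)) = ENNReal.ofReal s⁻¹ := by
    rw [← ENNReal.ofReal_mul (by positivity), ← Real.rpow_add hs, ← Real.rpow_neg_one]
    ring_nf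
  calc (∫⁻ y in ball a s, g y ∂μ) * ENNReal.ofReal (s ^ (-γ - 1))
      ≤ N * (ν (ball a s) ^ (-q⁻¹) * (K * ENNReal.ofReal (s ^ γ))) *
          ENNReal.ofReal (s ^ (-γ - 1)) := by
        gcongr
        exact (setLIntegral_le_rpow_mul_rpow hp hg.aemeasurable _).trans (by gcongr)
    _ = K * (ν (ball a s) ^ (-q⁻¹) * N *
          (ENNReal.ofReal (s ^ γ) * ENNReal.ofReal (s ^ (-γ - 1)))) := by ring
    _ = _ := by rw [hpow]

variable [OpensMeasurableSpace X] [SFinite μ]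

theorem setLIntegral_compl_ball_div_dist_rpow_le (hg : Measurable g) (hγ : 0 < γ) (hr : 0 < r)
    (a : X) :
    ∫⁻ y in (ball a r)ᶜ, g y / ENNReal.ofReal (dist y a ^ γ) ∂μ ≤
      ENNReal.ofReal γ *
        ∫⁻ s in Ioi r, (∫⁻ y in ball a s, g y ∂μ) * ENNReal.ofReal (s ^ (-γ - 1)) := by
  set φ : ℝ → ℝ≥0∞ := fun s => ENNReal.ofReal (s ^ (-γ - 1))
  set G : X → ℝ → ℝ≥0∞ := fun y s => (Ioi (dist y a)).indicator (fun s => g y * φ s) s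
  have hG : Measurable (Function.uncurry G) :=
    Measurable.indicator (f := fun z : X × ℝ => g z.1 * φ z.2) (by fun_prop)
      (measurableSet_lt (by fun_prop) measurable_snd : MeasurableSet {z : X × ℝ | dist z.1 a < z.2})
  have hpt (y : X) (hy : y ∈ (ball a r)ᶜ) :
      g y / ENNReal.ofReal (dist y a ^ γ) = ENNReal.ofReal γ * ∫⁻ s in Ioi r, G y s := by
    have hry : r ≤ dist y a := by simpa using hy
    rw [div_eq_mul_inv, inv_ofReal_rpow_eq_lintegral_Ioi (hr.trans_le hry) hγ, mul_left_comm,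
      lintegral_indicator measurableSet_Ioi, Measure.restrict_restrict measurableSet_Ioi,
      inter_eq_left.mpr (Ioi_subset_Ioi hry), lintegral_const_mul _ (by fun_prop)]
  calc ∫⁻ y in (ball a r)ᶜ, g y / ENNReal.ofReal (dist y a ^ γ) ∂μ
      = ∫⁻ y in (ball a r)ᶜ, (ENNReal.ofReal γ * ∫⁻ s in Ioi r, G y s) ∂μ :=
        setLIntegral_congr_fun measurableSet_ball.compl hpt
    _ ≤ ENNReal.ofReal γ * ∫⁻ y, (∫⁻ s in Ioi r, G y s) ∂μ := by
        rw [lintegral_const_mul' _ _ ENNReal.ofReal_ne_top]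
        gcongr
        exact Measure.restrict_le_self
    _ = ENNReal.ofReal γ * ∫⁻ s in Ioi r, ∫⁻ y, G y s ∂μ := by
        rw [lintegral_lintegral_swap hG.aemeasurable]
    _ = _ := by
        congr 1
        refine lintegral_congr fun s => ?_
        rw [← lintegral_mul_const _ hg, ← lintegral_indicator measurableSet_ball]
        rfl

theorem IsTwoSidedDoubling.setLIntegral_compl_ball_le_tailNorm (hν : IsTwoSidedDoubling ρ D ν)
    (hp : p.HolderConjugate p') (hγ : 0 < γ)
    (hK : ∀ x, ∀ r > 0, ν (ball x r) ^ q⁻¹ * μ (ball x r) ^ p'⁻¹ ≤ K * ENNReal.ofReal (r ^ γ))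
    (hg : Measurable g) (hr : 0 < r) {a x : X} (hx : x ∈ ball a r) :
    ∫⁻ y in (ball a (2 * r))ᶜ, g y / ENNReal.ofReal (dist x y ^ γ) ∂μ ≤
      ENNReal.ofReal (2 ^ γ) * (ENNReal.ofReal γ * K) * tailNorm μ ν p q g a r := by
  have hdist (y : X) (hy : y ∈ (ball a (2 * r))ᶜ) : g y / ENNReal.ofReal (dist x y ^ γ) ≤
      ENNReal.ofReal (2 ^ γ) * (g y / ENNReal.ofReal (dist y a ^ γ)) := by
    have hya : 2 * r ≤ dist y a := by simpa using hy
    have hxa : dist x a < r := hx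
    have htri : dist y a / 2 ≤ dist x y := by linarith [dist_triangle_left y a x]
    have hya0 : 0 < dist y a := by linarith
    calc g y / ENNReal.ofReal (dist x y ^ γ)
        ≤ g y / ENNReal.ofReal ((dist y a / 2) ^ γ) := by gcongr
      _ = ENNReal.ofReal (2 ^ γ) * (g y / ENNReal.ofReal (dist y a ^ γ)) := by
          rw [Real.div_rpow hya0.le zero_le_two, ENNReal.ofReal_div_of_pos (by positivity),
            div_eq_mul_inv, 
            ENNReal.inv_div (.inl ENNReal.ofReal_ne_top)
              (.inl (ENNReal.ofReal_pos.mpr (by positivity)).ne')]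
          simp only [div_eq_mul_inv]
          ring
  calc ∫⁻ y in (ball a (2 * r))ᶜ, g y / ENNReal.ofReal (dist x y ^ γ) ∂μ
      ≤ ∫⁻ y in (ball a (2 * r))ᶜ,
          ENNReal.ofReal (2 ^ γ) * (g y / ENNReal.ofReal (dist y a ^ γ)) ∂μ :=
        setLIntegral_mono' measurableSet_ball.compl hdist
    _ ≤ ENNReal.ofReal (2 ^ γ) * (ENNReal.ofReal γ * ∫⁻ s in Ioi (2 * r),
          (∫⁻ y in ball a s, g y ∂μ) * ENNReal.ofReal (s ^ (-γ - 1))) := by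
        rw [lintegral_const_mul' _ _ ENNReal.ofReal_ne_top]
        gcongr
        exact setLIntegral_compl_ball_div_dist_rpow_le hg hγ (by positivity) a
    _ ≤ ENNReal.ofReal (2 ^ γ) * (ENNReal.ofReal γ * (K * tailNorm μ ν p q g a (2 * r))) := by
        rw [tailNorm, ← lintegral_const_mul' _ _ ENNReal.coe_ne_top]
        refine mul_le_mul_right (mul_le_mul_right
          (setLIntegral_mono' measurableSet_Ioi fun s hs => ?_) _) _
        have hs0 : 0 < s := (by positivity : 0 < 2 * r).trans hs
        exact setLIntegral_ball_mul_ofReal_rpow_le hp hg hs0 (hν.ball_ne_zero a s hs0)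
          (hν.ball_ne_top a s) (hK a s hs0)
    _ ≤ _ := by
        have h2r : r ≤ 2 * r := by linarith
        rw [mul_assoc, mul_assoc]
        gcongr
        exact tailNorm_anti a h2r

end TailNorm

section LocalEstimate

variable {X : Type*} [MeasurableSpace X] {μ ν : Measure X}

theorem lintegral_comp_indicator {S : Set X} (hS : MeasurableSet S) (g : X → ℝ≥0∞)
    {φ : X → ℝ≥0∞ → ℝ≥0∞} (hφ : ∀ y, φ y 0 = 0) :
    ∫⁻ y, φ y (S.indicator g y) ∂μ = ∫⁻ y in S, φ y (g y) ∂μ := by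
  rw [← lintegral_indicator hS]
  refine lintegral_congr fun y => ?_
  by_cases hy : y ∈ S <;> simp [hy, hφ]

theorem rpow_setLIntegral_rpow_le_of_le_mul_add {F T : X → ℝ≥0∞} {c b : ℝ≥0∞} {q : ℝ} {S : Set X}
    (hq : 1 ≤ q) (hS : MeasurableSet S) (hT : Measurable T) (hF : ∀ x ∈ S, F x ≤ c * T x + b) :
    (∫⁻ x in S, F x ^ q ∂ν) ^ q⁻¹ ≤ c * (∫⁻ x, T x ^ q ∂ν) ^ q⁻¹ + b * ν S ^ q⁻¹ := by
  have hq0 : 0 < q := one_pos.trans_le hq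
  have hq' : 0 ≤ q⁻¹ := inv_nonneg.mpr hq0.le
  calc (∫⁻ x in S, F x ^ q ∂ν) ^ q⁻¹
      ≤ (∫⁻ x in S, (c * T x + b) ^ q ∂ν) ^ q⁻¹ := by
        gcongr ?_ ^ _
        exact setLIntegral_mono' hS fun x hx => by gcongr; exact hF x hx
    _ ≤ (∫⁻ x in S, (c * T x) ^ q ∂ν) ^ q⁻¹ + (∫⁻ _ in S, b ^ q ∂ν) ^ q⁻¹ := by
        simpa only [one_div, Pi.add_apply] using
          ENNReal.lintegral_Lp_add_le (hT.const_mul c).aemeasurable aemeasurable_const hq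
    _ = c * (∫⁻ x in S, T x ^ q ∂ν) ^ q⁻¹ + b * ν S ^ q⁻¹ := by
        simp_rw [ENNReal.mul_rpow_of_nonneg _ _ hq0.le]
        rw [lintegral_const_mul _ (hT.pow_const q), setLIntegral_const,
          ENNReal.mul_rpow_of_nonneg _ _ hq', ENNReal.mul_rpow_of_nonneg _ _ hq',
          ENNReal.rpow_rpow_inv hq0.ne', ENNReal.rpow_rpow_inv hq0.ne']
    _ ≤ c * (∫⁻ x, T x ^ q ∂ν) ^ q⁻¹ + b * ν S ^ q⁻¹ := by
        gcongr
        exact Measure.restrict_le_self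

variable [PseudoMetricSpace X] [OpensMeasurableSpace X] [SecondCountableTopology X] [SFinite μ]
  {p p' q q' γ : ℝ} {K D D' : ℝ≥0} {ρ ρ' : ℝ≥0∞}

theorem IsTwoSidedDoubling.lintegral_div_dist_rpow_le_dyadicPotential_add_tailNorm
    (hμ : IsTwoSidedDoubling ρ D μ) (hν : IsTwoSidedDoubling ρ' D' ν) (hρ : ρ < 1)
    (hp : p.HolderConjugate p') (hq : 0 ≤ q) (hγ : 0 < γ)
    (hK : ∀ x, ∀ r > 0, ν (ball x r) ^ q⁻¹ * μ (ball x r) ^ p'⁻¹ ≤ K * ENNReal.ofReal (r ^ γ))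
    {g : X → ℝ≥0∞} (hg : Measurable g) {a x : X} {r : ℝ} (hr : 0 < r) (hx : x ∈ ball a r) :
    ∫⁻ y, g y / ENNReal.ofReal (dist x y ^ γ) ∂μ ≤
      K * ENNReal.ofReal (4 ^ γ) *
          dyadicPotential μ ν q⁻¹ p'⁻¹ ((ball a (2 * r)).indicator g) x +
        ENNReal.ofReal (2 ^ γ) * (ENNReal.ofReal γ * K) * tailNorm μ ν p q g a r := by
  rw [← lintegral_add_compl _ (measurableSet_ball (x := a) (ε := 2 * r))]
  refine add_le_add ?_ (hν.setLIntegral_compl_ball_le_tailNorm hp hγ hK hg hr hx)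
  calc ∫⁻ y in ball a (2 * r), g y / ENNReal.ofReal (dist x y ^ γ) ∂μ
      = ∫⁻ y, (ball a (2 * r)).indicator g y / ENNReal.ofReal (dist x y ^ γ) ∂μ :=
        (lintegral_comp_indicator measurableSet_ball g
          (φ := fun y b => b / ENNReal.ofReal (dist x y ^ γ)) fun _ => ENNReal.zero_div).symm
    _ ≤ _ := lintegral_div_dist_rpow_le_dyadicPotential hμ hν hρ hK (inv_nonneg.mpr hq)
        hp.symm.inv_nonneg hγ.le (hg.indicator measurableSet_ball) x

theorem IsTwoSidedDoubling.exists_setLIntegral_fractional_rpow_le_tailNorm [SigmaFinite ν]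
    (hμ : IsTwoSidedDoubling ρ D μ) (hν : IsTwoSidedDoubling ρ' D' ν) (hρ : ρ < 1) (hρ' : ρ' < 1)
    (hp : p.HolderConjugate p') (hq : q.HolderConjugate q') (hpq : p < q) (hγ : 0 < γ)
    (hK : ∀ x, ∀ r > 0, ν (ball x r) ^ q⁻¹ * μ (ball x r) ^ p'⁻¹ ≤ K * ENNReal.ofReal (r ^ γ)) :
    ∃ C : ℝ≥0, ∀ (a : X) (r : ℝ) (g : X → ℝ≥0∞), 0 < r → Measurable g →
      ∫⁻ y in ball a (2 * r), g y ^ p ∂μ ≠ ⊤ →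
        (∫⁻ x in ball a r, (∫⁻ y, g y / ENNReal.ofReal (dist x y ^ γ) ∂μ) ^ q ∂ν) ^ q⁻¹ ≤
          C * (ν (ball a r) ^ q⁻¹ * tailNorm μ ν p q g a r) := by
  obtain ⟨C, hC⟩ := hμ.exists_lintegral_dyadicPotential_rpow_le hν hρ hρ' hp hq hpq
  set Cnear : ℝ≥0∞ := K * ENNReal.ofReal (4 ^ γ)
  set Cfar : ℝ≥0∞ := ENNReal.ofReal (2 ^ γ) * (ENNReal.ofReal γ * K)
  set C' : ℝ≥0∞ := Cnear * (C * (2 * (D' ^ 2 : ℝ≥0∞) ^ q⁻¹)) + Cfar with hC'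
  have hC'top : C' ≠ ⊤ := by
    have := hq.inv_nonneg
    finiteness
  refine ⟨C'.toNNReal, fun a r g hr hg hgtop => ?_⟩
  rw [ENNReal.coe_toNNReal hC'top]
  set B := ball a (2 * r)
  set M := ν (ball a r) ^ q⁻¹ * tailNorm μ ν p q g a r
  have hgB : Measurable (B.indicator g) := hg.indicator measurableSet_ball
  have hgB_norm : ∫⁻ y, B.indicator g y ^ p ∂μ = ∫⁻ y in B, g y ^ p ∂μ :=
    lintegral_comp_indicator measurableSet_ball g (φ := fun _ b => b ^ p) fun _ =>
      ENNReal.zero_rpow_of_pos hp.pos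
  have hnear : (∫⁻ x, dyadicPotential μ ν q⁻¹ p'⁻¹ (B.indicator g) x ^ q ∂ν) ^ q⁻¹ ≤
      C * (2 * (D' ^ 2 : ℝ≥0∞) ^ q⁻¹ * M) := by
    refine (hC _ hgB (hgB_norm ▸ hgtop)).trans (mul_le_mul_right ?_ _)
    rw [hgB_norm]
    exact hν.rpow_setLIntegral_ball_le_mul_tailNorm hp.nonneg hq.nonneg hr a
  calc (∫⁻ x in ball a r, (∫⁻ y, g y / ENNReal.ofReal (dist x y ^ γ) ∂μ) ^ q ∂ν) ^ q⁻¹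
      ≤ Cnear * (∫⁻ x, dyadicPotential μ ν q⁻¹ p'⁻¹ (B.indicator g) x ^ q ∂ν) ^ q⁻¹ +
          Cfar * tailNorm μ ν p q g a r * ν (ball a r) ^ q⁻¹ :=
        rpow_setLIntegral_rpow_le_of_le_mul_add hq.lt.le measurableSet_ball
          (measurable_dyadicPotential hgB) fun x hx =>
            hμ.lintegral_div_dist_rpow_le_dyadicPotential_add_tailNorm hν hρ hp hq.nonneg hγ hK hg
              hr hx
    _ ≤ Cnear * (C * (2 * (D' ^ 2 : ℝ≥0∞) ^ q⁻¹ * M)) + Cfar * M := by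
        rw [mul_assoc Cfar, mul_comm (tailNorm _ _ _ _ _ _ _)]
        gcongr
    _ = C' * M := by
        rw [hC']
        ring

theorem IsMuckenhouptPair.exists_setLIntegral_fractional_rpow_le_tailNorm {E : Type*}
    [NormedAddCommGroup E] [NormedSpace ℝ E] [FiniteDimensional ℝ E] [Nontrivial E]
    [MeasurableSpace E] [BorelSpace E] {lam ν μ : Measure E} [lam.IsAddHaarMeasure] [SFinite μ]
    [SigmaFinite ν] (h : IsMuckenhouptPair lam ν μ q⁻¹ p'⁻¹ K) (hp : p.HolderConjugate p')
    (hq : q.HolderConjugate q') (hpq : p < q) (hγ : Module.finrank ℝ E * (q⁻¹ + p'⁻¹) = γ) :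
    ∃ C : ℝ≥0, ∀ (a : E) (r : ℝ) (g : E → ℝ≥0∞), 0 < r → Measurable g →
      ∫⁻ y in ball a (2 * r), g y ^ p ∂μ ≠ ⊤ →
        (∫⁻ x in ball a r, (∫⁻ y, g y / ENNReal.ofReal (dist x y ^ γ) ∂μ) ^ q ∂ν) ^ q⁻¹ ≤
          C * (ν (ball a r) ^ q⁻¹ * tailNorm μ ν p q g a r) := by
  have hpos : 0 < q⁻¹ + p'⁻¹ := add_pos hq.inv_pos hp.symm.inv_pos
  have hγ0 : 0 < γ := hγ ▸ mul_pos (Nat.cast_pos.mpr Module.finrank_pos) hpos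
  obtain ⟨ρ, hρ, D, hμ⟩ := h.symm.exists_isTwoSidedDoubling hp.symm.inv_pos hq.inv_pos
  obtain ⟨ρ', hρ', D', hν⟩ := h.exists_isTwoSidedDoubling hq.inv_pos hp.symm.inv_pos
  obtain ⟨K', hK'⟩ := h.exists_ball_le_ofReal_rpow hpos.le hγ
  have := FiniteDimensional.proper ℝ E
  exact hμ.exists_setLIntegral_fractional_rpow_le_tailNorm hν hρ hρ' hp hq hpq hγ0 hK'

end LocalEstimate

section WeightedLebesgue

variable {X : Type*} [MeasurableSpace X] {lam : Measure X} {u v : X → ℝ≥0∞}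

theorem rpow_add_le_setLIntegral_rpow_mul_setLIntegral_rpow {s t : ℝ} (hs : 0 < s) (ht : 0 < t)
    (hu : Measurable u) (hv : Measurable v) (huv : ∀ᵐ x ∂lam, 1 ≤ u x ^ s * v x ^ t) (S : Set X) :
    lam S ^ (s + t) ≤ (∫⁻ x in S, u x ∂lam) ^ s * (∫⁻ x in S, v x ∂lam) ^ t := by
  have hst : 0 < s + t := add_pos hs ht
  have hle : lam S ≤ (∫⁻ x in S, u x ∂lam) ^ (s / (s + t)) *
      (∫⁻ x in S, v x ∂lam) ^ (t / (s + t)) := by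
    calc lam S = ∫⁻ _ in S, 1 ∂lam := (setLIntegral_one S).symm
      _ ≤ ∫⁻ x in S, u x ^ (s / (s + t)) * v x ^ (t / (s + t)) ∂lam := by
          refine lintegral_mono_ae (ae_restrict_of_ae ?_)
          filter_upwards [huv] with x hx
          calc (1 : ℝ≥0∞) = 1 ^ (s + t)⁻¹ := (ENNReal.one_rpow _).symm
            _ ≤ (u x ^ s * v x ^ t) ^ (s + t)⁻¹ := by gcongr
            _ = u x ^ (s / (s + t)) * v x ^ (t / (s + t)) := by
                rw [ENNReal.mul_rpow_of_nonneg _ _ (by positivity), ← ENNReal.rpow_mul,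
                  ← ENNReal.rpow_mul, div_eq_mul_inv, div_eq_mul_inv]
      _ ≤ _ := ENNReal.lintegral_mul_norm_pow_le hu.aemeasurable hv.aemeasurable (by positivity)
          (by positivity) (by rw [← add_div, div_self hst.ne'])
  calc lam S ^ (s + t) ≤ ((∫⁻ x in S, u x ∂lam) ^ (s / (s + t)) *
        (∫⁻ x in S, v x ∂lam) ^ (t / (s + t))) ^ (s + t) := by gcongr
    _ = _ := by
        rw [ENNReal.mul_rpow_of_nonneg _ _ hst.le, ← ENNReal.rpow_mul, ← ENNReal.rpow_mul,
          div_mul_cancel₀ _ hst.ne', div_mul_cancel₀ _ hst.ne']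

theorem rpow_mul_rpow_le_mul_rpow_add {V A B K : ℝ≥0∞} {s t : ℝ} (hV0 : V ≠ 0) (hVtop : V ≠ ⊤)
    (hs : 0 ≤ s) (ht : 0 ≤ t) (h : (V⁻¹ * A) ^ s * (V⁻¹ * B) ^ t ≤ K) :
    A ^ s * B ^ t ≤ K * V ^ (s + t) := by
  have hcancel (A : ℝ≥0∞) : V * (V⁻¹ * A) = A := ENNReal.mul_inv_cancel_left hV0 hVtop
  calc A ^ s * B ^ t = (V * (V⁻¹ * A)) ^ s * (V * (V⁻¹ * B)) ^ t := by rw [hcancel, hcancel]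
    _ = (V⁻¹ * A) ^ s * (V⁻¹ * B) ^ t * V ^ (s + t) := by
        rw [ENNReal.mul_rpow_of_nonneg _ _ hs, ENNReal.mul_rpow_of_nonneg _ _ ht,
          ENNReal.rpow_add _ _ hV0 hVtop]
        ring
    _ ≤ K * V ^ (s + t) := by gcongr

/-- The measure `w dx`. -/
noncomputable abbrev weightMeasure (lam : Measure X) (w : X → ℝ) : Measure X :=
  lam.withDensity fun x => ENNReal.ofReal (w x)

theorem setLIntegral_weightMeasure {w : X → ℝ} (hw : Measurable w) (F : X → ℝ≥0∞) {S : Set X}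
    (hS : MeasurableSet S) :
    ∫⁻ x in S, F x ∂weightMeasure lam w = ∫⁻ x in S, F x * ENNReal.ofReal (w x) ∂lam := by
  simpa only [Pi.mul_apply, mul_comm] using
    setLIntegral_withDensity_eq_setLIntegral_mul_non_measurable lam hw.ennreal_ofReal F hS
      (.of_forall fun _ => ENNReal.ofReal_lt_top)

variable {w f : X → ℝ} {p p' : ℝ} {S : Set X}

/-- The density of `|f| dx` with respect to `w ^ (-p') dx`. Its norm in
`L^p(w ^ (-p') dx)` is the norm of `f` in `L^p(w ^ p dx)`. -/
noncomputable def dualDensity (p' : ℝ) (w f : X → ℝ) (x : X) : ℝ≥0∞ :=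
  ENNReal.ofReal |f x| * ENNReal.ofReal (w x ^ p')

theorem measurable_dualDensity (hw : Measurable w) (hf : Measurable f) :
    Measurable (dualDensity p' w f) := by
  unfold dualDensity
  fun_prop

theorem lintegral_dualDensity_div (hw : Measurable w) (hw0 : ∀ᵐ x ∂lam, 0 < w x)
    (c : X → ℝ≥0∞) :
    ∫⁻ x, dualDensity p' w f x / c x ∂weightMeasure lam (fun x => w x ^ (-p')) =
      ∫⁻ x, ENNReal.ofReal |f x| / c x ∂lam := by
  rw [← setLIntegral_univ, setLIntegral_weightMeasure (by fun_prop) _ .univ, setLIntegral_univ]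
  refine lintegral_congr_ae ?_
  filter_upwards [hw0] with x hx
  have hcancel : ENNReal.ofReal (w x ^ p') * ENNReal.ofReal (w x ^ (-p')) = 1 := by
    rw [← ENNReal.ofReal_mul (by positivity), ← Real.rpow_add hx, add_neg_cancel, Real.rpow_zero,
      ENNReal.ofReal_one]
  calc dualDensity p' w f x / c x * ENNReal.ofReal (w x ^ (-p'))
      = ENNReal.ofReal |f x| / c x *
          (ENNReal.ofReal (w x ^ p') * ENNReal.ofReal (w x ^ (-p'))) := by
        simp only [dualDensity, div_eq_mul_inv]
        ring
    _ = ENNReal.ofReal |f x| / c x := by rw [hcancel, mul_one]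

theorem setLIntegral_dualDensity_rpow (hw : Measurable w) (hw0 : ∀ᵐ x ∂lam, 0 < w x)
    (hp : p.HolderConjugate p') (hS : MeasurableSet S) :
    ∫⁻ x in S, dualDensity p' w f x ^ p ∂weightMeasure lam (fun x => w x ^ (-p')) =
      ∫⁻ x in S, ENNReal.ofReal |f x| ^ p * ENNReal.ofReal (w x ^ p) ∂lam := by
  rw [setLIntegral_weightMeasure (by fun_prop) _ hS]
  refine lintegral_congr_ae (ae_restrict_of_ae ?_)
  filter_upwards [hw0] with x hx
  have hexp : p' * p + -p' = p := by linarith [hp.mul_eq_add]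
  rw [dualDensity, ENNReal.mul_rpow_of_nonneg _ _ hp.nonneg,
    ENNReal.ofReal_rpow_of_pos (Real.rpow_pos_of_pos hx p'), mul_assoc,
    ← ENNReal.ofReal_mul (by positivity), ← Real.rpow_mul hx.le, ← Real.rpow_add hx, hexp]

end WeightedLebesgue

section EuclideanWeights

variable {n : ℕ} {w f : EuclideanSpace ℝ (Fin n) → ℝ} {p p' q : ℝ}
  {S : Set (EuclideanSpace ℝ (Fin n))}

theorem wSet_eq_weightMeasure (hS : MeasurableSet S) : wSet w S = weightMeasure volume w S :=
  (withDensity_apply _ hS).symm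

theorem wLpE_eq_setLIntegral_weightMeasure (hw : Measurable w)
    (F : EuclideanSpace ℝ (Fin n) → ℝ≥0∞) (hS : MeasurableSet S) :
    wLpE q w F S = (∫⁻ x in S, F x ^ q ∂weightMeasure volume w) ^ q⁻¹ := by
  rw [wLpE, one_div, setLIntegral_weightMeasure hw _ hS]

theorem wLp_eq_setLIntegral_dualDensity (hw : Measurable w) (hw0 : ∀ᵐ x, 0 < w x)
    (hp : p.HolderConjugate p') (hS : MeasurableSet S) :
    wLp p (fun x => w x ^ p) f S =
      (∫⁻ x in S, dualDensity p' w f x ^ p ∂weightMeasure volume fun x => w x ^ (-p')) ^ p⁻¹ := by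
  rw [wLp, one_div, setLIntegral_dualDensity_rpow hw hw0 hp hS]

theorem fracIntE_eq_lintegral_dualDensity (hw : Measurable w) (hw0 : ∀ᵐ x, 0 < w x) (α : ℝ) :
    fracIntE α f = fun x => ∫⁻ y, dualDensity p' w f y / ENNReal.ofReal (dist x y ^ (n - α))
      ∂weightMeasure volume fun y => w y ^ (-p') :=
  funext fun _ => (lintegral_dualDensity_div hw hw0 _).symm

theorem MuckApq.exists_isMuckenhouptPair (hA : MuckApq p q p' w) (hw : IsWeight w) (hq : 0 < q)
    (hp' : 0 < p') :
    ∃ K : ℝ≥0, IsMuckenhouptPair volume (weightMeasure volume fun x => w x ^ q)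
      (weightMeasure volume fun x => w x ^ (-p')) q⁻¹ p'⁻¹ K := by
  obtain ⟨hwm, -, -, hw0⟩ := hw
  obtain ⟨C, -, hC⟩ := hA
  simp only [one_div] at hC
  refine ⟨C.toNNReal, fun S hS => ?_, fun x r hr => ?_⟩
  · rw [withDensity_apply _ hS, withDensity_apply _ hS]
    refine rpow_add_le_setLIntegral_rpow_mul_setLIntegral_rpow (inv_pos.mpr hq) (inv_pos.mpr hp')
      (by fun_prop) (by fun_prop) ?_ S
    filter_upwards [hw0] with x hx
    rw [ENNReal.ofReal_rpow_of_pos (by positivity), ENNReal.ofReal_rpow_of_pos (by positivity),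
      ← Real.rpow_mul hx.le, ← Real.rpow_mul hx.le, mul_inv_cancel₀ hq.ne', neg_mul,
      mul_inv_cancel₀ hp'.ne', ← ENNReal.ofReal_mul (by positivity), ← Real.rpow_add hx,
      add_neg_cancel, Real.rpow_zero, ENNReal.ofReal_one]
  · rw [withDensity_apply _ measurableSet_ball, withDensity_apply _ measurableSet_ball]
    exact rpow_mul_rpow_le_mul_rpow_add (measure_ball_pos volume x hr).ne' measure_ball_ne_top
      (inv_nonneg.mpr hq.le) (inv_nonneg.mpr hp'.le) (hC x r hr)

end EuclideanWeights

section Exponents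

variable {d α p p' q : ℝ}

theorem lt_of_one_div_eq_one_div_sub_div (hd : 0 < d) (hα : 0 < α) (hp : 0 < p) (hpd : p < d / α)
    (hq : 1 / q = 1 / p - α / d) : p < q := by
  have hαp : α / d < 1 / p := by
    rwa [div_lt_div_iff₀ hd hp, one_mul, mul_comm, ← lt_div_iff₀ hα]
  have hq0 : 0 < q := one_div_pos.mp (by linarith)
  exact lt_of_one_div_lt_one_div hq0 (by linarith [div_pos hα hd])

theorem mul_inv_add_inv_eq_sub (hd : d ≠ 0) (hp : p.HolderConjugate p')
    (hq : 1 / q = 1 / p - α / d) : d * (q⁻¹ + p'⁻¹) = d - α := by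
  have hsum : q⁻¹ + p'⁻¹ = 1 - α / d := by
    rw [one_div, one_div] at hq
    linarith [hp.inv_add_inv_eq_one]
  rw [hsum, mul_sub, mul_one, mul_div_cancel₀ _ hd]

end Exponents

/-- Let `0 < α < n`, `1 < p < n/α`, `1/q = 1/p − α/n`, `w ∈ A_{p,q}`.
Then there is `C > 0`, independent of `f`, `a`, `r`, such that for every `a ∈ ℝⁿ`, `r > 0`
and `f ∈ L^{p,w^p}_loc`:
`‖I_α f‖_{L^{q,w^q}(B(a,r))} ≤ C·w^q(B(a,r))^{1/q}·∫_r^∞ w^q(B(a,s))^{-1/q}‖f‖_{L^{p,w^p}(B(a,s))} ds/s`. -/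
theorem statement12 {n : ℕ} (α p q p' : ℝ) (hα : 0 < α) (hαn : α < n)
    (hp : 1 < p) (hpn : p < (n : ℝ) / α) (hq : 1 / q = 1 / p - α / n)
    (hp' : 1 / p + 1 / p' = 1)
    (w : EuclideanSpace ℝ (Fin n) → ℝ) (hw : IsWeight w) (hApq : MuckApq p q p' w) :
    ∃ C : ℝ, 0 < C ∧
      ∀ (a : EuclideanSpace ℝ (Fin n)) (r : ℝ) (f : EuclideanSpace ℝ (Fin n) → ℝ),
        0 < r → MemLocWLp p (fun x => w x ^ p) f →
        wLpE q (fun x => w x ^ q) (fracIntE α f) (ball a r) ≤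
          ENNReal.ofReal C * wSet (fun x => w x ^ q) (ball a r) ^ (1 / q) *
            ∫⁻ s in Set.Ioi r,
              wSet (fun x => w x ^ q) (ball a s) ^ (-(1 / q)) *
                wLp p (fun x => w x ^ p) f (ball a s) * ENNReal.ofReal s⁻¹ := by
  have hn : (0 : ℝ) < n := hα.trans hαn
  have : NeZero n := ⟨by rintro rfl; simp at hn⟩
  have hpp : p.HolderConjugate p' := Real.holderConjugate_iff.mpr ⟨hp, by simpa using hp'⟩
  have hpq : p < q := lt_of_one_div_eq_one_div_sub_div hn hα hpp.pos hpn hq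
  have hqq := Real.HolderConjugate.conjExponent (hp.trans hpq)
  have hγ : Module.finrank ℝ (EuclideanSpace ℝ (Fin n)) * (q⁻¹ + p'⁻¹) = n - α := by
    rw [finrank_euclideanSpace_fin, mul_inv_add_inv_eq_sub hn.ne' hpp hq]
  obtain ⟨K, hK⟩ := hApq.exists_isMuckenhouptPair hw hqq.pos hpp.symm.pos
  obtain ⟨C, hC⟩ := hK.exists_setLIntegral_fractional_rpow_le_tailNorm hpp hqq hpq hγ
  obtain ⟨hwm, -, -, hw0⟩ := hw
  refine ⟨C + 1, by positivity, fun a r f hr ⟨hf, hlp⟩ => ?_⟩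
  have hfin := (hlp a (2 * r) (by positivity)).ne
  simp only [wLp_eq_setLIntegral_dualDensity hwm hw0 hpp measurableSet_ball,
    wLpE_eq_setLIntegral_weightMeasure (hwm.pow_const q) _ measurableSet_ball,
    wSet_eq_weightMeasure measurableSet_ball, fracIntE_eq_lintegral_dualDensity (p' := p') hwm hw0,
    one_div] at hfin ⊢
  have hfin' := mt (ENNReal.rpow_eq_top_iff_of_pos hpp.inv_pos).mpr hfin
  have hC1 : (C : ℝ≥0∞) ≤ ENNReal.ofReal (C + 1) := by
    rw [← ENNReal.ofReal_coe_nnreal]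
    exact ENNReal.ofReal_le_ofReal (lt_add_one _).le
  rw [mul_assoc]
  exact (hC a r _ hr (measurable_dualDensity hwm hf) hfin').trans (mul_le_mul_left hC1 _)
end
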